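/- arXiv:1610.06878 — 2 statements merged into one kernel-verified Lean document; each statement's English description precedes it below -/
import Mathlib

section
/- Let δ21 = X² + 2X + 2, δ22 = X² + 2, and δ81 = X⁸ + 4X⁷ + 6X⁶ + 4X⁵ + 2X⁴ + 8X³ + 24X² + 32X + 16. For n ≥ 5, let K be a finite field with 2^n elements, and for a ∈ K define the binary Kloosterman sum 𝒦(a) = 1 + Σ_{x ∈ K, x ≠ 0} (−1)^{τ(x⁻¹ + a·x)} ∈ ℤ, where τ(y) ∈ {0,1} ⊆ ℤ is 1 if T_1(y) = 1 and 0 if T_1(y) = 0. Then the number of a ∈ K with 𝒦(a) ≡ 0 (mod 32) equals 2^{n−3} − (1/8)·(ρ_n(δ21) + 2ρ_n(δ22) + ρ_n(δ81)), as complex numbers. -/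
open Polynomial
open scoped Classical

/-- For a finite field `K` with `2^n` elements, the `k`-th trace function
`T_k(a) = Σ_S ∏_{i ∈ S} a^(2^i)`, the sum over all `k`-element subsets `S` of `{0,…,n-1}`.
`T_1` is the absolute trace to `F_2`. -/
noncomputable def traceFn (q n k : ℕ) {K : Type*} [CommRing K] (a : K) : K :=
  ∑ S ∈ Finset.powersetCard k (Finset.range n), ∏ i ∈ S, a ^ (q ^ i)

/-- `ρ_n(γ)`: the sum of the `n`-th powers of the complex roots of `γ ∈ ℤ[X]`,
counted with multiplicity. -/
noncomputable def rho (n : ℕ) (γ : Polynomial ℤ) : ℂ :=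
  ((γ.map (Int.castRingHom ℂ)).roots.map (· ^ n)).sum

/-- The binary Kloosterman sum
`𝒦(a) = 1 + Σ_{x ∈ K, x ≠ 0} (−1)^{τ(x⁻¹ + a·x)}`, where `τ(y) ∈ {0,1} ⊆ ℤ` is `1` if
`T_1(y) = 1` and `0` if `T_1(y) = 0`. -/
noncomputable def kloosterman (n : ℕ) (K : Type) [Field K] [Fintype K] (a : K) : ℤ :=
  1 + ∑ x ∈ Finset.univ.filter (fun x : K => x ≠ 0),
        (-1 : ℤ) ^ (if traceFn 2 n 1 (x⁻¹ + a * x) = 1 then 1 else 0)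

noncomputable def d21 : Polynomial ℤ := X ^ 2 + 2 * X + 2
noncomputable def d22 : Polynomial ℤ := X ^ 2 + 2
noncomputable def d81 : Polynomial ℤ :=
  X ^ 8 + 4 * X ^ 7 + 6 * X ^ 6 + 4 * X ^ 5 + 2 * X ^ 4 + 8 * X ^ 3 + 24 * X ^ 2 + 32 * X + 16

/-!
For `a ≠ 0`, the elliptic curve `y² + xy = x³ + a²` has `2 ^ n + 𝒦(a)` rational points. Its
rational 2-power torsion is cyclic, so `32 ∣ 𝒦(a)` means that the point of order two can be
halved four times. Solving the halving equations turns this into `T₁(a) = T₂(a) = T₄(a) = 0`.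

These traces are coefficients of the characteristic polynomial of `a` over `𝔽₂`. Read modulo `X⁵`,
reversed polynomials with constant coefficient `1` form the group `ℤ/8 × ℤ/2`, and the three
coefficients vanish precisely on the kernel of a homomorphism to `ℤ/8`. The vanishing is therefore
detected by the eight characters of `ℤ/8`, viewed as multiplicative characters of `𝔽₂[X]`. The
trivial one contributes `2 ^ n`. Each other one has an `L`-function of degree at most `3`, and its
sum over `K` is minus the `n`-th power sum of the reciprocal roots. The product of these seven
`L`-functions is the reverse of `δ21 · δ22² · δ81`.
-/

section FrobeniusNorm

lemma traceFn_one_eq_sum {R : Type*} [CommRing R] (q n : ℕ) (a : R) :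
    traceFn q n 1 a = ∑ i ∈ Finset.range n, a ^ q ^ i := by
  simp [traceFn, Finset.powersetCard_one]

lemma sq_dvd_prod_one_add_mul_sub {ι R : Type*} [CommRing R] (s : Finset ι) (d : R) (f : ι → R) :
    d ^ 2 ∣ ∏ i ∈ s, (1 + d * f i) - (1 + d * ∑ i ∈ s, f i) := by
  induction s using Finset.induction_on with
  | empty => simp
  | insert i s hi ih =>
    obtain ⟨c, hc⟩ := ih
    rw [Finset.prod_insert hi, Finset.sum_insert hi]
    exact ⟨c * (1 + d * f i) + f i * ∑ j ∈ s, f j, by linear_combination (1 + d * f i) * hc⟩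

variable {K : Type*} [Field K] (p : ℕ) [ExpChar K p] (n : ℕ)

/-- The product of the first `n` Frobenius conjugates of a polynomial. When `K` has `p ^ n`
elements this is the norm of `f` down to the prime field. -/
noncomputable def frobNorm (f : K[X]) : K[X] :=
  ∏ i ∈ Finset.range n, f.map (iterateFrobenius K p i)

lemma frobNorm_mul (f g : K[X]) : frobNorm p n (f * g) = frobNorm p n f * frobNorm p n g := by
  simp only [frobNorm, Polynomial.map_mul, Finset.prod_mul_distrib]

variable {p n} in
lemma frobNorm_map_frobenius [Fintype K] (hK : Fintype.card K = p ^ n) (f : K[X]) :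
    frobNorm p n (f.map (frobenius K p)) = frobNorm p n f := by
  have hshift : ∀ i, (f.map (frobenius K p)).map (iterateFrobenius K p i)
      = f.map (iterateFrobenius K p (i + 1)) := fun i => by
    rw [map_map]
    congr 1
    ext x
    simp only [RingHom.comp_apply, frobenius_def, iterateFrobenius_def, ← pow_mul, pow_succ']
  have hcycle : iterateFrobenius K p n = iterateFrobenius K p 0 := by
    ext x
    rw [iterateFrobenius_def, ← hK, FiniteField.pow_card, iterateFrobenius_zero, RingHom.id_apply]
  obtain rfl | hn := n.eq_zero_or_pos
  · rfl
  obtain ⟨m, rfl⟩ := Nat.exists_eq_succ_of_ne_zero hn.ne'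
  simp only [frobNorm, hshift]
  rw [Finset.prod_range_succ, Finset.prod_range_succ', hcycle]

lemma coeff_frobNorm_one_add_C_mul_X (a : K) (k : ℕ) :
    (frobNorm p n (1 + C a * X)).coeff k = traceFn p n k a := by
  have hprod : frobNorm p n (1 + C a * X)
      = ∑ S ∈ (Finset.range n).powerset, C (∏ i ∈ S, a ^ p ^ i) * X ^ S.card := by
    simp only [frobNorm, Polynomial.map_add, Polynomial.map_one, Polynomial.map_mul, map_C, map_X,
      iterateFrobenius_def, Finset.prod_one_add, Finset.prod_mul_distrib, Finset.prod_const,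
      map_prod]
  simp only [hprod, finsetSum_coeff, coeff_C_mul_X_pow, traceFn]
  rw [← Finset.sum_filter, Finset.powersetCard_eq_filter]
  simp only [eq_comm]

lemma X_pow_dvd_frobNorm_sub {m : ℕ} {f g : K[X]} (h : X ^ m ∣ f - g) :
    X ^ m ∣ frobNorm p n f - frobNorm p n g := by
  have hconj : ∀ i, X ^ m ∣ f.map (iterateFrobenius K p i) - g.map (iterateFrobenius K p i) :=
    fun i => by simpa using Polynomial.map_dvd (iterateFrobenius K p i) h
  simp only [← Ideal.mem_span_singleton, ← Ideal.Quotient.eq] at hconj ⊢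
  simp only [frobNorm, map_prod, hconj]

lemma coeff_frobNorm_one_add_X_pow_mul {m j : ℕ} (hj : j < m) (q : K[X]) :
    (frobNorm p n (1 + X ^ m * q)).coeff (m + j) = traceFn p n 1 (q.coeff j) := by
  have hdvd := sq_dvd_prod_one_add_mul_sub (Finset.range n) (X ^ m : K[X])
    fun i => q.map (iterateFrobenius K p i)
  rw [← pow_mul, X_pow_dvd_iff] at hdvd
  have hcoeff := hdvd (m + j) (by omega)
  rw [coeff_sub, sub_eq_zero] at hcoeff
  simp only [frobNorm, Polynomial.map_add, Polynomial.map_one, Polynomial.map_mul,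
    Polynomial.map_pow, map_X, hcoeff, coeff_add, coeff_one, coeff_X_pow_mul', finsetSum_coeff,
    coeff_map, iterateFrobenius_def, traceFn_one_eq_sum]
  simp [show m ≠ 0 by omega]

variable {p n} in
/-- A factor `φ(h) / h` is invisible to the norm. -/
lemma coeff_frobNorm_eq_of_X_pow_dvd [Fintype K] (hK : Fintype.card K = p ^ n) {m : ℕ}
    {f h r : K[X]} (h0 : h.coeff 0 = 1) (hdvd : X ^ m ∣ f * h - h.map (frobenius K p) * r)
    {k : ℕ} (hk : k < m) : (frobNorm p n f).coeff k = (frobNorm p n r).coeff k := by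
  have hnorm := X_pow_dvd_frobNorm_sub p n hdvd
  rw [frobNorm_mul, frobNorm_mul, frobNorm_map_frobenius hK,
    mul_comm (frobNorm p n h), ← sub_mul] at hnorm
  have hunit : ¬ X ∣ frobNorm p n h := by
    simp [X_dvd_iff, frobNorm, coeff_zero_prod, h0]
  have := X_pow_dvd_iff.mp (prime_X.pow_dvd_of_dvd_mul_right m hunit hnorm) k hk
  rwa [coeff_sub, sub_eq_zero] at this

end FrobeniusNorm

section TraceIdentities

variable {K : Type*} [Field K] [Fintype K] [CharP K 2] {n : ℕ} (hK : Fintype.card K = 2 ^ n)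
include hK

lemma traceFn_two_sq_add (w : K) :
    traceFn 2 n 2 (w ^ 2 + w) = traceFn 2 n 1 (w ^ 3 + w ^ 2) := by
  have h2 : (2 : K[X]) = 0 := CharTwo.two_eq_zero
  have hdvd : X ^ 3 ∣ (1 + C (w ^ 2 + w) * X) * (1 + C w * X)
      - (1 + C w * X).map (frobenius K 2) * (1 + X ^ 2 * C (w ^ 3 + w ^ 2)) := by
    simp only [Polynomial.map_add, Polynomial.map_one, Polynomial.map_mul, map_C, map_X,
      frobenius_def, map_add, map_pow]
    exact ⟨-(C w ^ 2 * (C w ^ 3 + C w ^ 2)), by linear_combination C w * X * h2⟩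
  rw [← coeff_frobNorm_one_add_C_mul_X,
    coeff_frobNorm_eq_of_X_pow_dvd hK (by simp) hdvd (by omega),
    coeff_frobNorm_one_add_X_pow_mul 2 n (m := 2) (j := 0) (by omega), coeff_C_zero]

lemma traceFn_four_sq_add {w y : K} (hy : y ^ 2 + y = w ^ 3 + w ^ 2) :
    traceFn 2 n 4 (w ^ 2 + w) = traceFn 2 n 1 ((w ^ 3 + w ^ 2) * (y + w ^ 4)) := by
  have hC : C y ^ 2 + C y = C w ^ 3 + C w ^ 2 := by simp only [← C_pow, ← C_add, hy]
  have hdvd : X ^ 5 ∣ (1 + C (w ^ 2 + w) * X) * ((1 + C w * X) * (1 + C y * X ^ 2))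
      - ((1 + C w * X) * (1 + C y * X ^ 2)).map (frobenius K 2)
        * (1 + X ^ 3 * (C (w ^ 2 * (w ^ 3 + w ^ 2))
          + C ((w ^ 3 + w ^ 2) * (y + w ^ 4)) * X)) := by
    simp only [Polynomial.map_add, Polynomial.map_one, Polynomial.map_mul, Polynomial.map_pow,
      map_C, map_X, frobenius_def, map_add, map_pow, map_mul]
    exact ⟨(C w ^ 3 + C w ^ 2) * (C w ^ 2 * (C y + C w ^ 4) + C y ^ 2 * C w ^ 2
      + X * C y ^ 3 + X ^ 2 * C w ^ 2 * C y ^ 2 * (C y + C w ^ 4)),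
      by grind [CharTwo.two_eq_zero (R := K[X])]⟩
  rw [← coeff_frobNorm_one_add_C_mul_X,
    coeff_frobNorm_eq_of_X_pow_dvd hK (by simp) hdvd (by omega),
    coeff_frobNorm_one_add_X_pow_mul 2 n (m := 3) (j := 1) (by omega)]
  simp only [coeff_add, coeff_mul_X, coeff_C_zero, coeff_C_succ, zero_add]

end TraceIdentities

section ArtinSchreier

/-- The additive subgroup of values of the Artin–Schreier map `t ↦ t ^ 2 + t`. -/
def artinSchreier (R : Type*) [CommRing R] [CharP R 2] : AddSubgroup R :=
  ((frobenius R 2).toAddMonoidHom + AddMonoidHom.id R).range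

variable {R : Type*} [CommRing R] [CharP R 2]

lemma mem_artinSchreier {u : R} : u ∈ artinSchreier R ↔ ∃ t, t ^ 2 + t = u := Iff.rfl

lemma sq_add_self_mem_artinSchreier (t : R) : t ^ 2 + t ∈ artinSchreier R := ⟨t, rfl⟩

lemma sq_mem_artinSchreier {u : R} : u ^ 2 ∈ artinSchreier R ↔ u ∈ artinSchreier R := by
  have hadd : u ^ 2 = (u ^ 2 + u) + u := by rw [CharTwo.add_cancel_right]
  rw [hadd, AddSubgroup.add_mem_cancel_left _ (sq_add_self_mem_artinSchreier u)]

lemma mem_artinSchreier_congr {u v : R} (t : R) (h : u + v = t ^ 2 + t) :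
    u ∈ artinSchreier R ↔ v ∈ artinSchreier R := by
  have hadd : v = u + (t ^ 2 + t) := by rw [← h, CharTwo.add_cancel_left]
  rw [hadd, AddSubgroup.add_mem_cancel_right _ (sq_add_self_mem_artinSchreier t)]

variable [IsDomain R]

lemma sq_add_self_eq_sq_add_self_iff {s t : R} : s ^ 2 + s = t ^ 2 + t ↔ s = t ∨ s = t + 1 := by
  have h2 : (2 : R) = 0 := CharTwo.two_eq_zero
  have hfactor : s ^ 2 + s - (t ^ 2 + t) = (s - t) * (s - (t + 1)) := by
    linear_combination (s + s * t - t ^ 2 - t) * h2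
  rw [← sub_eq_zero, hfactor, mul_eq_zero, sub_eq_zero, sub_eq_zero]

end ArtinSchreier

section AbsoluteTrace

variable {K : Type*} [Field K]

lemma finrank_zmod_of_card_eq [Fintype K] {p n : ℕ} [Fact p.Prime] [Algebra (ZMod p) K]
    (hK : Fintype.card K = p ^ n) : Module.finrank (ZMod p) K = n := by
  rw [Module.card_eq_pow_finrank (K := ZMod p), ZMod.card] at hK
  exact Nat.pow_right_injective (Fact.out : p.Prime).two_le hK

lemma algebraMap_trace_eq_traceFn [Fintype K] {p n : ℕ} [Fact p.Prime] [Algebra (ZMod p) K]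
    (hK : Fintype.card K = p ^ n) (u : K) :
    algebraMap (ZMod p) K (Algebra.trace (ZMod p) K u) = traceFn p n 1 u := by
  rw [FiniteField.algebraMap_trace_eq_sum_pow, finrank_zmod_of_card_eq hK, Nat.card_zmod,
    traceFn_one_eq_sum]

variable [CharP K 2]

lemma artinSchreier_eq_ker_trace [Finite K] [Algebra (ZMod 2) K] :
    artinSchreier K = (Algebra.trace (ZMod 2) K).toAddMonoidHom.ker := by
  have hle : artinSchreier K ≤ (Algebra.trace (ZMod 2) K).toAddMonoidHom.ker := by
    rintro _ ⟨t, rfl⟩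
    have hconj : Algebra.trace (ZMod 2) K (t ^ 2) = Algebra.trace (ZMod 2) K t := by
      simpa [FiniteField.frobeniusAlgEquiv_apply] using
        Algebra.trace_eq_of_algEquiv (FiniteField.frobeniusAlgEquiv (ZMod 2) K 2) t
    simp [frobenius_def, hconj, CharTwo.add_self_eq_zero]
  have hker : (((frobenius K 2).toAddMonoidHom + AddMonoidHom.id K).ker : Set K) = {0, 1} := by
    ext t
    simpa [frobenius_def] using sq_add_self_eq_sq_add_self_iff (s := t) (t := 0)
  have hindex : (artinSchreier K).index = 2 := by
    rw [artinSchreier, AddSubgroup.index_range, ← SetLike.coe_sort_coe, hker,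
      Nat.card_coe_set_eq, Set.ncard_pair zero_ne_one]
  have hindex_ker : (Algebra.trace (ZMod 2) K).toAddMonoidHom.ker.index = 2 := by
    rw [AddSubgroup.index_ker, AddMonoidHom.range_eq_top.mpr (Algebra.trace_surjective (ZMod 2) K),
      AddSubgroup.card_top, Nat.card_zmod]
  have hrel := AddSubgroup.relIndex_mul_index hle
  rw [hindex, hindex_ker, Nat.mul_eq_right two_ne_zero, AddSubgroup.relIndex_eq_one] at hrel
  exact le_antisymm hle hrel

variable [Fintype K] {n : ℕ}

lemma mem_artinSchreier_iff_traceFn (hK : Fintype.card K = 2 ^ n) {u : K} :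
    u ∈ artinSchreier K ↔ traceFn 2 n 1 u = 0 := by
  let _ : Algebra (ZMod 2) K := ZMod.algebra K 2
  rw [← algebraMap_trace_eq_traceFn hK, FaithfulSMul.algebraMap_eq_zero_iff,
    artinSchreier_eq_ker_trace]
  rfl

lemma traceFn_one_eq_one_iff (hK : Fintype.card K = 2 ^ n) {u : K} :
    traceFn 2 n 1 u = 1 ↔ u ∉ artinSchreier K := by
  let _ : Algebra (ZMod 2) K := ZMod.algebra K 2
  have hbit : ∀ b : ZMod 2, b = 1 ↔ b ≠ 0 := by decide
  rw [mem_artinSchreier_iff_traceFn hK, ← algebraMap_trace_eq_traceFn hK,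
    FaithfulSMul.algebraMap_eq_zero_iff, FaithfulSMul.algebraMap_eq_one_iff, hbit]

lemma card_sq_add_self_eq (hK : Fintype.card K = 2 ^ n) (u : K) :
    (Finset.card {t : K | t ^ 2 + t = u} : ℤ) =
      1 + (-1) ^ (if traceFn 2 n 1 u = 1 then 1 else 0) := by
  by_cases hu : u ∈ artinSchreier K
  · obtain ⟨t, rfl⟩ := mem_artinSchreier.mp hu
    have hfiber : ({s : K | s ^ 2 + s = t ^ 2 + t} : Finset K) = {t, t + 1} := by
      ext s
      simp [sq_add_self_eq_sq_add_self_iff]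
    rw [hfiber, Finset.card_pair (by simp), if_neg (by rwa [traceFn_one_eq_one_iff hK, not_not])]
    norm_num
  · rw [if_pos ((traceFn_one_eq_one_iff hK).mpr hu), Finset.card_eq_zero.mpr]
    · norm_num
    · exact Finset.filter_eq_empty_iff.mpr fun t _ ht => hu ⟨t, ht⟩

end AbsoluteTrace

lemma two_pow_succ_dvd_card_iff (k : ℕ) {G : Type*} [AddCommGroup G] [Finite G] {T : G}
    (hT0 : T ≠ 0) (hT : ∀ x : G, 2 • x = 0 ↔ x = 0 ∨ x = T) :
    2 ^ (k + 1) ∣ Nat.card G ↔ ∃ P : G, 2 ^ k • P = T := by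
  constructor
  · induction k generalizing G with
    | zero => exact fun _ => ⟨T, by simp⟩
    | succ k ih =>
      intro hdvd
      let double : G →+ G := nsmulAddMonoidHom 2
      have hker : (double.ker : Set G) = {0, T} := by
        ext x
        exact hT x
      have hcard : Nat.card double.range * 2 = Nat.card G := by
        rw [← AddSubgroup.card_mul_index double.range, AddSubgroup.index_range,
          ← SetLike.coe_sort_coe double.ker, hker, Nat.card_coe_set_eq, Set.ncard_pair hT0.symm]
      have hdvd_range : 2 ^ (k + 1) ∣ Nat.card double.range := by
        rw [← hcard, pow_succ] at hdvd
        exact Nat.dvd_of_mul_dvd_mul_right two_pos hdvd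
      obtain ⟨⟨S, hS⟩, hS_order⟩ := exists_prime_addOrderOf_dvd_card' (G := double.range) 2
        ((dvd_pow_self 2 k.succ_ne_zero).trans hdvd_range)
      rw [AddSubgroup.addOrderOf_mk] at hS_order
      obtain rfl : S = T := by
        refine ((hT S).mp ?_).resolve_left ?_
        · rw [← hS_order, addOrderOf_nsmul_eq_zero]
        · rintro rfl
          simp at hS_order
      obtain ⟨⟨_, Q, rfl⟩, hQ⟩ := ih (G := double.range) (T := ⟨S, hS⟩)
        (by simpa using hT0)
        (fun x => by rw [Subtype.ext_iff, Subtype.ext_iff, Subtype.ext_iff]; exact hT x) hdvd_range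
      exact ⟨Q, by simpa [double, smul_smul, pow_succ] using congrArg Subtype.val hQ⟩
  · rintro ⟨P, rfl⟩
    have horder : addOrderOf P = 2 ^ (k + 1) := by
      refine addOrderOf_eq_prime_pow hT0 ?_
      rw [pow_succ', mul_smul]
      exact (hT _).mpr (Or.inr rfl)
    exact horder ▸ addOrderOf_dvd_natCard P

lemma finite_weierstrass_point {R : Type*} [CommRing R] [Finite R]
    (W : WeierstrassCurve.Affine R) : Finite W.Point :=
  have : Finite (WithZero {xy : R × R // W.Nonsingular xy.1 xy.2}) :=
    inferInstanceAs (Finite (Option _))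
  .of_equiv _ W.nonsingularPointEquiv.symm

/-- The curve `y² + xy = x³ + a²`, whose number of rational points over a field with `2 ^ n`
elements is `2 ^ n + 𝒦(a)`. -/
def kloostermanCurve {R : Type*} [CommRing R] (a : R) : WeierstrassCurve.Affine R :=
  ⟨1, 0, 0, 0, a ^ 2⟩

namespace kloostermanCurve

open WeierstrassCurve.Affine

variable {K : Type*} [Field K] {a x y : K}

lemma equation_iff : (kloostermanCurve a).Equation x y ↔ y ^ 2 + x * y = x ^ 3 + a ^ 2 := by
  simp [WeierstrassCurve.Affine.equation_iff, kloostermanCurve]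

variable [CharP K 2]

lemma negY_eq : (kloostermanCurve a).negY x y = y + x := by
  simp [kloostermanCurve, negY, CharTwo.neg_eq, CharTwo.sub_eq_add]

lemma isElliptic (ha : a ≠ 0) : (kloostermanCurve a).IsElliptic := by
  have h2 : (2 : K) = 0 := CharTwo.two_eq_zero
  have hΔ : (kloostermanCurve a).Δ = a ^ 2 := by
    simp only [kloostermanCurve, WeierstrassCurve.Δ, WeierstrassCurve.b₂, WeierstrassCurve.b₄,
      WeierstrassCurve.b₆, WeierstrassCurve.b₈]
    linear_combination (-a ^ 2 - 216 * a ^ 4) * h2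
  exact ⟨hΔ ▸ (pow_ne_zero 2 ha).isUnit⟩

lemma nonsingular_iff (ha : a ≠ 0) :
    (kloostermanCurve a).Nonsingular x y ↔ y ^ 2 + x * y = x ^ 3 + a ^ 2 := by
  have := isElliptic ha
  rw [← equation_iff_nonsingular, equation_iff]

/-- At `x = 0` the division by zero makes both sides true. -/
lemma exists_equation_iff :
    (∃ y, (kloostermanCurve a).Equation x y) ↔ x + (a / x) ^ 2 ∈ artinSchreier K := by
  simp only [equation_iff, mem_artinSchreier]
  obtain rfl | hx := eq_or_ne x 0
  · exact iff_of_true ⟨a, by ring⟩ ⟨0, by simp⟩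
  · constructor
    · rintro ⟨y, hy⟩
      refine ⟨y / x, ?_⟩
      field_simp
      linear_combination hy
    · rintro ⟨t, ht⟩
      refine ⟨x * t, ?_⟩
      field_simp at ht
      linear_combination ht

lemma two_nsmul_some_zero (h : (kloostermanCurve a).Nonsingular 0 y) :
    2 • (Point.some 0 y h) = 0 := by
  rw [two_nsmul]
  exact Point.add_self_of_Y_eq (by rw [negY_eq, add_zero])

lemma two_nsmul_some (hx : x ≠ 0) (h : (kloostermanCurve a).Nonsingular x y) :
    ∃ y' h', 2 • Point.some x y h = Point.some (x ^ 2 + (a / x) ^ 2) y' h' := by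
  have hne : y ≠ (kloostermanCurve a).negY x y := by
    rw [negY_eq]
    simpa using hx
  have hX : (kloostermanCurve a).addX x x ((kloostermanCurve a).slope x x y y)
      = x ^ 2 + (a / x) ^ 2 := by
    have h2 : (2 : K) = 0 := CharTwo.two_eq_zero
    have heq := equation_iff.mp h.1
    have hdenom : y - (y + x) = x := by linear_combination - x * h2
    rw [slope_of_Y_ne rfl hne, negY_eq, hdenom]
    simp only [kloostermanCurve, addX]
    field_simp
    linear_combination heq + (x ^ 4 * 4 + x ^ 3 - x ^ 2 * y * 3 - x * y) * h2
  rw [two_nsmul, Point.add_self_of_Y_ne hne]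
  have hcast : ∀ {X Y X' : K} (hXY : (kloostermanCurve a).Nonsingular X Y), X = X' →
      ∃ Y' h', Point.some X Y hXY = Point.some X' Y' h' := by
    rintro X Y _ hXY rfl
    exact ⟨Y, hXY, rfl⟩
  exact hcast _ hX

/-- The unique rational point of order two. -/
def twoTorsionPoint (ha : a ≠ 0) : (kloostermanCurve a).Point :=
  .some 0 a ((nonsingular_iff ha).mpr (by ring))

lemma some_zero_eq_twoTorsionPoint (ha : a ≠ 0) (h : (kloostermanCurve a).Nonsingular 0 y) :
    Point.some 0 y h = twoTorsionPoint ha := by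
  obtain rfl : y = a := CharTwo.sq_injective (by simpa using (nonsingular_iff ha).mp h)
  rfl

lemma two_nsmul_eq_zero_iff (ha : a ≠ 0) (P : (kloostermanCurve a).Point) :
    2 • P = 0 ↔ P = 0 ∨ P = twoTorsionPoint ha := by
  constructor
  · intro hP
    rcases P with _ | ⟨x, y, h⟩
    · exact Or.inl rfl
    · obtain rfl | hx := eq_or_ne x 0
      · exact Or.inr (some_zero_eq_twoTorsionPoint ha h)
      · obtain ⟨y', h', hdouble⟩ := two_nsmul_some hx h
        exact absurd (hdouble ▸ hP) (Point.some_ne_zero _)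
  · rintro (rfl | rfl)
    · exact nsmul_zero 2
    · exact two_nsmul_some_zero _

lemma exists_equation_of_double {s u : K} (hs : s ≠ 0) (hsu : s ^ 4 + a ^ 2 = u * s ^ 2)
    (h : (kloostermanCurve a).Equation u y) : ∃ t, (kloostermanCurve a).Equation s t := by
  have h2 : (2 : K) = 0 := CharTwo.two_eq_zero
  have hdiv : (a / u) ^ 2 = (s ^ 2 / u) ^ 2 + s ^ 2 / u := by
    obtain rfl | hu := eq_or_ne u 0
    · simp
    · field_simp
      linear_combination hsu - s ^ 4 * h2
  have hu : u ∈ artinSchreier K := by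
    have hcurve := exists_equation_iff.mp ⟨y, h⟩
    rwa [hdiv, AddSubgroup.add_mem_cancel_right _ (sq_add_self_mem_artinSchreier _)] at hcurve
  rw [exists_equation_iff, mem_artinSchreier_congr s (v := u)]
  · exact hu
  · field_simp
    linear_combination hsu + s ^ 2 * (u - s ^ 2) * h2

lemma exists_two_nsmul_some_eq_iff (ha : a ≠ 0) {s u : K}
    (h : (kloostermanCurve a).Nonsingular u y) :
    (∃ t h', 2 • Point.some s t h' = Point.some u y h) ↔ s ^ 4 + a ^ 2 = u * s ^ 2 := by
  constructor
  · rintro ⟨t, h', hdouble⟩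
    obtain rfl | hs := eq_or_ne s 0
    · rw [two_nsmul_some_zero] at hdouble
      exact absurd hdouble.symm (Point.some_ne_zero _)
    · obtain ⟨t', h'', hdouble'⟩ := two_nsmul_some hs h'
      rw [hdouble, Point.some.injEq] at hdouble'
      rw [hdouble'.1]
      field_simp
  · intro hsu
    have hs : s ≠ 0 := by
      rintro rfl
      exact ha (by simpa using hsu)
    obtain rfl : s ^ 2 + (a / s) ^ 2 = u := by
      field_simp
      linear_combination hsu
    have := isElliptic ha
    obtain ⟨t, ht⟩ := exists_equation_of_double hs hsu h.1
    have hst := equation_iff_nonsingular.mp ht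
    obtain ⟨y', h', hdouble⟩ := two_nsmul_some hs hst
    obtain hP | hP := (Point.X_eq_iff (h₁ := h') (h₂ := h)).mp rfl
    · exact ⟨t, hst, hdouble.trans hP⟩
    · exact ⟨_, (nonsingular_neg ..).mpr hst, by
        rw [← Point.neg_some hst, smul_neg, hdouble, hP, neg_neg]⟩

/-- `IsDivisionX a k s` says that `s` is the `x`-coordinate of a rational point `P` such that
`2 ^ k • P` is the point of order two. By `exists_two_nsmul_some_eq_iff` halving a point only
constrains `x`-coordinates, so the recursion never mentions `y`. -/
def IsDivisionX {R : Type*} [CommRing R] (a : R) : ℕ → R → Prop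
  | 0, s => s = 0
  | k + 1, s => ∃ u, IsDivisionX a k u ∧ s ^ 4 + a ^ 2 = u * s ^ 2

lemma isDivisionX_iff (ha : a ≠ 0) (k : ℕ) (s : K) :
    IsDivisionX a k s ↔ ∃ t h, 2 ^ k • Point.some s t h = twoTorsionPoint ha := by
  induction k generalizing s with
  | zero =>
    simp only [IsDivisionX, pow_zero, one_smul]
    constructor
    · rintro rfl
      exact ⟨a, (nonsingular_iff ha).mpr (by ring), rfl⟩
    · rintro ⟨t, h, hst⟩
      rw [twoTorsionPoint, Point.some.injEq] at hst
      exact hst.1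
  | succ k ih =>
    simp only [IsDivisionX, ih, pow_succ (2 : ℕ), mul_smul]
    constructor
    · rintro ⟨u, ⟨y, h, hk⟩, hsu⟩
      obtain ⟨t, h', hdouble⟩ := (exists_two_nsmul_some_eq_iff ha h).mpr hsu
      exact ⟨t, h', hdouble ▸ hk⟩
    · rintro ⟨t, h', hk⟩
      rcases hdouble : 2 • Point.some s t h' with _ | ⟨u, y, h⟩
      · rw [hdouble] at hk
        exact absurd ((nsmul_zero _).symm.trans hk).symm (Point.some_ne_zero _)
      · exact ⟨u, ⟨y, h, hdouble ▸ hk⟩, (exists_two_nsmul_some_eq_iff ha h).mp ⟨t, h', hdouble⟩⟩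

lemma two_pow_succ_dvd_card_point_iff [Finite K] (ha : a ≠ 0) (k : ℕ) :
    2 ^ (k + 1) ∣ Nat.card (kloostermanCurve a).Point ↔ ∃ s, IsDivisionX a k s := by
  have := finite_weierstrass_point (kloostermanCurve a)
  rw [two_pow_succ_dvd_card_iff k (Point.some_ne_zero _) (two_nsmul_eq_zero_iff ha)]
  simp only [isDivisionX_iff ha]
  constructor
  · rintro ⟨_ | ⟨s, t, h⟩, hP⟩
    · exact absurd ((nsmul_zero _).symm.trans hP).symm (Point.some_ne_zero _)
    · exact ⟨s, t, h, hP⟩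
  · rintro ⟨s, t, h, hP⟩
    exact ⟨_, hP⟩

end kloostermanCurve

section HalvingTower

open kloostermanCurve

lemma isDivisionX_one_iff {R : Type*} [CommRing R] [IsDomain R] [CharP R 2] {a s : R} :
    IsDivisionX a 1 s ↔ s ^ 2 = a := by
  simp only [IsDivisionX, exists_eq_left, zero_mul, CharTwo.add_eq_zero]
  rw [show s ^ 4 = (s ^ 2) ^ 2 by ring, CharTwo.sq_inj]

variable {K : Type*} [Field K] [CharP K 2] [PerfectRing K 2] {a : K}

lemma isDivisionX_two_iff (ha : a ≠ 0) {s : K} :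
    IsDivisionX a 2 s ↔ ∃ w, w ^ 2 + w = a ∧ s ^ 4 = a * w ^ 2 := by
  have h2 : (2 : K) = 0 := CharTwo.two_eq_zero
  rw [IsDivisionX]
  simp only [isDivisionX_one_iff]
  constructor
  · rintro ⟨u, rfl, hsu⟩
    have hu : u ≠ 0 := by
      rintro rfl
      simp at ha
    refine ⟨s ^ 2 / u, ?_, ?_⟩
    · field_simp
      linear_combination hsu + (u * s ^ 2 - u ^ 4) * h2
    · field_simp
  · rintro ⟨w, rfl, hs⟩
    obtain ⟨u, hu⟩ := surjective_frobenius K 2 (w ^ 2 + w)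
    rw [frobenius_def] at hu
    refine ⟨u, hu, CharTwo.sq_inj.mp ?_⟩
    calc (s ^ 4 + (w ^ 2 + w) ^ 2) ^ 2
        = ((w ^ 2 + w) * (w ^ 2 + (w ^ 2 + w))) ^ 2 := by rw [hs]; ring
      _ = (w ^ 2 + w) * ((w ^ 2 + w) * w ^ 2) := by rw [CharTwo.add_cancel_left]; ring
      _ = (u * s ^ 2) ^ 2 := by rw [← hs, mul_pow, hu]; ring

lemma isDivisionX_three_iff (ha : a ≠ 0) {s : K} :
    IsDivisionX a 3 s ↔ ∃ w z, w ^ 2 + w = a ∧ z ^ 2 + z = w * (w + 1) ^ 3 ∧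
      s ^ 8 = z ^ 2 * (a * w ^ 2) := by
  rw [IsDivisionX]
  simp only [isDivisionX_two_iff ha]
  constructor
  · rintro ⟨u, ⟨w, rfl, hu⟩, hsu⟩
    have hw : w ≠ 0 := by
      rintro rfl
      simp at ha
    have hu0 : u ≠ 0 := by
      rintro rfl
      simp [ha, hw] at hu
    refine ⟨w, s ^ 4 / u ^ 2, rfl, ?_, ?_⟩
    · have hsq : s ^ 8 + u ^ 2 * s ^ 4 = (w ^ 2 + w) ^ 4 := by
        calc s ^ 8 + u ^ 2 * s ^ 4 = (s ^ 4 + u * s ^ 2) ^ 2 := by rw [CharTwo.add_sq]; ring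
          _ = (w ^ 2 + w) ^ 4 := by rw [← hsu, CharTwo.add_cancel_left]; ring
      field_simp
      linear_combination hsq - w * (w + 1) ^ 3 * hu
    · rw [← hu]
      field_simp
  · rintro ⟨w, z, rfl, hz, hs⟩
    obtain ⟨u, hu⟩ := (surjective_frobenius K 2).iterate 2 ((w ^ 2 + w) * w ^ 2)
    rw [iterate_frobenius, show 2 ^ 2 = 4 from rfl] at hu
    refine ⟨u, ⟨w, rfl, hu⟩, CharTwo.sq_inj.mp (CharTwo.sq_inj.mp ?_)⟩
    calc ((s ^ 4 + (w ^ 2 + w) ^ 2) ^ 2) ^ 2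
        = (s ^ 8) ^ 2 + (w * (w + 1) ^ 3) ^ 2 * ((w ^ 2 + w) * w ^ 2) ^ 2 := by
          rw [CharTwo.add_sq, CharTwo.add_sq]
          ring
      _ = (z ^ 4 + (z ^ 4 + z ^ 2)) * ((w ^ 2 + w) * w ^ 2) ^ 2 := by
          rw [hs, ← hz, CharTwo.add_sq]
          ring
      _ = u ^ 4 * s ^ 8 := by
          rw [CharTwo.add_cancel_left, hs, hu]
          ring
      _ = ((u * s ^ 2) ^ 2) ^ 2 := by ring

lemma exists_double_iff {s : K} (hs : s ≠ 0) :
    (∃ v, v ^ 4 + a ^ 2 = s * v ^ 2) ↔ a / s ∈ artinSchreier K := by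
  rw [← sq_mem_artinSchreier, mem_artinSchreier]
  constructor
  · rintro ⟨v, hv⟩
    refine ⟨v ^ 2 / s, ?_⟩
    field_simp
    linear_combination hv + (s * v ^ 2 - a ^ 2) * CharTwo.two_eq_zero (R := K)
  · rintro ⟨t, ht⟩
    obtain ⟨v, hv⟩ := surjective_frobenius K 2 (s * t)
    rw [frobenius_def] at hv
    refine ⟨v, ?_⟩
    rw [show v ^ 4 = (v ^ 2) ^ 2 by ring, hv]
    field_simp at ht
    linear_combination ht + (a ^ 2 - s ^ 2 * t) * CharTwo.two_eq_zero (R := K)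

lemma exists_double_iff_of_pow_eight_eq {u w z : K} (ha : w ^ 2 + w ≠ 0)
    (hz : z ^ 2 + z = w * (w + 1) ^ 3) (hu : u ^ 8 = z ^ 2 * ((w ^ 2 + w) * w ^ 2)) :
    (∃ s, s ^ 4 + (w ^ 2 + w) ^ 2 = u * s ^ 2) ↔
      w ^ 3 * (w + 1) * (z + 1) ^ 2 ∈ artinSchreier K := by
  have hw : w ≠ 0 := by
    rintro rfl
    simp at ha
  have hw1 : w + 1 ≠ 0 := fun h => ha (by linear_combination w * h)
  have hz0 : z ≠ 0 := by
    rintro rfl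
    simp [hw, hw1] at hz
  have hu0 : u ≠ 0 := by
    rintro rfl
    simp [hw, ha, hz0] at hu
  have hpow : ((((w ^ 2 + w) / u) ^ 2) ^ 2) ^ 2 = w ^ 3 * (w + 1) * (z + 1) ^ 2 := by
    have : (w ^ 2 + w) ^ 8 = w ^ 3 * (w + 1) * (z + 1) ^ 2 * u ^ 8 := by
      rw [hu]
      linear_combination w ^ 6 * (w + 1) ^ 2 * (-z ^ 2 - z - w * (w + 1) ^ 3) * hz
    simp only [div_pow, ← pow_mul]
    field_simp
    linear_combination this
  rw [exists_double_iff hu0, ← hpow, sq_mem_artinSchreier, sq_mem_artinSchreier,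
    sq_mem_artinSchreier]

lemma exists_isDivisionX_four_iff (ha : a ≠ 0) :
    (∃ s, IsDivisionX a 4 s) ↔ ∃ w z, w ^ 2 + w = a ∧ z ^ 2 + z = w * (w + 1) ^ 3 ∧
      w ^ 3 * (w + 1) * (z + 1) ^ 2 ∈ artinSchreier K := by
  constructor
  · rintro ⟨s, u, hu, hs⟩
    obtain ⟨w, z, rfl, hz, huz⟩ := (isDivisionX_three_iff ha).mp hu
    exact ⟨w, z, rfl, hz, (exists_double_iff_of_pow_eight_eq ha hz huz).mp ⟨s, hs⟩⟩
  · rintro ⟨w, z, rfl, hz, hmem⟩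
    obtain ⟨u, hu⟩ := (surjective_frobenius K 2).iterate 3 (z ^ 2 * ((w ^ 2 + w) * w ^ 2))
    rw [iterate_frobenius] at hu
    obtain ⟨s, hs⟩ := (exists_double_iff_of_pow_eight_eq ha hz hu).mpr hmem
    exact ⟨s, u, (isDivisionX_three_iff ha).mpr ⟨w, z, rfl, hz, hu⟩, hs⟩

end HalvingTower

section PointCount

variable {K : Type*} [Field K] [Fintype K] [CharP K 2] {n : ℕ} (hK : Fintype.card K = 2 ^ n)
include hK

lemma exists_tower_iff_traceFn (a : K) :
    (∃ w z, w ^ 2 + w = a ∧ z ^ 2 + z = w * (w + 1) ^ 3 ∧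
      w ^ 3 * (w + 1) * (z + 1) ^ 2 ∈ artinSchreier K) ↔
    traceFn 2 n 1 a = 0 ∧ traceFn 2 n 2 a = 0 ∧ traceFn 2 n 4 a = 0 := by
  have h2 : (2 : K) = 0 := CharTwo.two_eq_zero
  have hfour : ∀ {w z : K}, z ^ 2 + z = w * (w + 1) ^ 3 →
      (w ^ 3 * (w + 1) * (z + 1) ^ 2 ∈ artinSchreier K ↔ traceFn 2 n 4 (w ^ 2 + w) = 0) := by
    intro w z hz
    have hy : (z + w ^ 2 + w) ^ 2 + (z + w ^ 2 + w) = w ^ 3 + w ^ 2 := by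
      linear_combination hz + (z * w ^ 2 + z * w + w ^ 4 + 2 * w ^ 3 + 2 * w ^ 2 + w) * h2
    rw [traceFn_four_sq_add hK hy, ← mem_artinSchreier_iff_traceFn hK]
    refine mem_artinSchreier_congr (w ^ 2 * (z + w ^ 2 + w) + w ^ 4 + w ^ 3) ?_
    linear_combination w ^ 3 * hz + (w ^ 3 * (w + 1) * z + w ^ 4 + 2 * w ^ 5 - 3 * w ^ 7
      - 2 * w ^ 5 * (w + 1) * z - 2 * w ^ 8) * h2
  have htwo : ∀ w : K, traceFn 2 n 2 (w ^ 2 + w) = 0 ↔ ∃ z, z ^ 2 + z = w * (w + 1) ^ 3 := by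
    intro w
    rw [traceFn_two_sq_add hK, ← mem_artinSchreier_iff_traceFn hK, ← mem_artinSchreier]
    refine mem_artinSchreier_congr (w ^ 2 + w) ?_
    linear_combination (w ^ 3 + w ^ 2) * h2
  rw [← mem_artinSchreier_iff_traceFn hK, mem_artinSchreier]
  constructor
  · rintro ⟨w, z, rfl, hz, hmem⟩
    exact ⟨⟨w, rfl⟩, (htwo w).mpr ⟨z, hz⟩, (hfour hz).mp hmem⟩
  · rintro ⟨⟨w, rfl⟩, hT2, hT4⟩
    obtain ⟨z, hz⟩ := (htwo w).mp hT2
    exact ⟨w, z, rfl, hz, (hfour hz).mpr hT4⟩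

end PointCount

section KloostermanSum

variable {K : Type} [Field K] [Fintype K] [CharP K 2]

lemma card_kloostermanCurve_point_eq_sum {a : K} (ha : a ≠ 0) :
    Nat.card (kloostermanCurve a).Point =
      1 + ∑ x : K, Finset.card {y : K | y ^ 2 + x * y = x ^ 3 + a ^ 2} := by
  have haffine : Nat.card {xy : K × K // (kloostermanCurve a).Nonsingular xy.1 xy.2} =
      ∑ x : K, Finset.card {y : K | y ^ 2 + x * y = x ^ 3 + a ^ 2} := by
    simp only [kloostermanCurve.nonsingular_iff ha, Nat.card_eq_fintype_card,
      Fintype.card_subtype, Finset.card_filter, Fintype.sum_prod_type]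
  rw [Nat.card_congr (kloostermanCurve a).nonsingularPointEquiv, ← haffine, add_comm]
  exact Finite.card_option

variable {n : ℕ} (hK : Fintype.card K = 2 ^ n)
include hK

lemma traceFn_one_sq_add_eq_one_iff (x y : K) :
    traceFn 2 n 1 (x + y ^ 2) = 1 ↔ traceFn 2 n 1 (x + y) = 1 := by
  rw [traceFn_one_eq_one_iff hK, traceFn_one_eq_one_iff hK, not_iff_not]
  refine mem_artinSchreier_congr y ?_
  linear_combination x * CharTwo.two_eq_zero (R := K)

lemma kloosterman_eq_one_add_sum_div (a : K) :
    kloosterman n K a = 1 + ∑ x : K with x ≠ 0,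
      (-1) ^ (if traceFn 2 n 1 (x + (a / x) ^ 2) = 1 then 1 else 0) := by
  rw [kloosterman]
  congr 1
  refine Finset.sum_nbij' (·⁻¹) (·⁻¹) (by simp) (by simp) (by simp) (by simp) fun x _ => ?_
  simp only [traceFn_one_sq_add_eq_one_iff hK, div_inv_eq_mul]

lemma card_kloostermanCurve_fiber_of_ne_zero (a : K) {x : K} (hx : x ≠ 0) :
    (Finset.card {y : K | y ^ 2 + x * y = x ^ 3 + a ^ 2} : ℤ) =
      1 + (-1) ^ (if traceFn 2 n 1 (x + (a / x) ^ 2) = 1 then 1 else 0) := by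
  rw [← card_sq_add_self_eq hK, Nat.cast_inj]
  refine Finset.card_nbij' (· / x) (x * ·) ?_ ?_ ?_ ?_
  · intro y hy
    simp only [Finset.coe_filter, Finset.mem_univ, true_and, Set.mem_ofPred_eq] at hy ⊢
    field_simp
    linear_combination hy
  · intro t ht
    simp only [Finset.coe_filter, Finset.mem_univ, true_and, Set.mem_ofPred_eq] at ht ⊢
    field_simp at ht
    linear_combination ht
  · intro y _
    exact mul_div_cancel₀ y hx
  · intro t _
    exact mul_div_cancel_left₀ t hx

lemma card_kloostermanCurve_point {a : K} (ha : a ≠ 0) :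
    (Nat.card (kloostermanCurve a).Point : ℤ) = 2 ^ n + kloosterman n K a := by
  have hzero : ({y : K | y ^ 2 + 0 * y = 0 ^ 3 + a ^ 2} : Finset K) = {a} := by
    ext y
    simp [CharTwo.sq_inj]
  have hcard : ((Finset.univ.erase (0 : K)).card : ℤ) = 2 ^ n - 1 := by
    rw [Finset.cast_card_erase_of_mem (Finset.mem_univ _), Finset.card_univ, hK]
    simp
  rw [card_kloostermanCurve_point_eq_sum ha, kloosterman_eq_one_add_sum_div hK,
    Finset.filter_ne', ← Finset.add_sum_erase _ _ (Finset.mem_univ 0), hzero]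
  push_cast
  rw [Finset.sum_congr rfl fun x hx =>
      card_kloostermanCurve_fiber_of_ne_zero hK a (Finset.ne_of_mem_erase hx),
    Finset.sum_add_distrib, Finset.sum_const, nsmul_one, hcard]
  simp only [Finset.card_singleton, Nat.cast_one]
  ring

lemma sum_neg_one_pow_traceFn_one :
    ∑ u : K, (-1 : ℤ) ^ (if traceFn 2 n 1 u = 1 then 1 else 0) = 0 := by
  have hfiber : Fintype.card K = ∑ u : K, Finset.card {t : K | t ^ 2 + t = u} :=
    Finset.card_eq_sum_card_fiberwise fun t _ => Finset.mem_univ (t ^ 2 + t)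
  have hcast := congrArg (Nat.cast (R := ℤ)) hfiber
  rw [Nat.cast_sum, Finset.sum_congr rfl fun u _ => card_sq_add_self_eq hK u,
    Finset.sum_add_distrib, Finset.sum_const, nsmul_one, Finset.card_univ] at hcast
  linarith

lemma kloosterman_zero : kloosterman n K 0 = 0 := by
  have h0 : traceFn 2 n 1 (0 : K) ≠ 1 := by
    rw [Ne, traceFn_one_eq_one_iff hK, not_not]
    exact zero_mem _
  rw [kloosterman_eq_one_add_sum_div hK, ← sum_neg_one_pow_traceFn_one hK, Finset.filter_ne',
    ← Finset.add_sum_erase _ _ (Finset.mem_univ 0), if_neg h0]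
  simp

lemma thirtyTwo_dvd_kloosterman_iff (hn : 5 ≤ n) (a : K) :
    32 ∣ kloosterman n K a ↔
      traceFn 2 n 1 a = 0 ∧ traceFn 2 n 2 a = 0 ∧ traceFn 2 n 4 a = 0 := by
  rw [← exists_tower_iff_traceFn hK]
  obtain rfl | ha := eq_or_ne a 0
  · rw [kloosterman_zero hK]
    exact iff_of_true (dvd_zero _) ⟨0, 0, by simp, by simp, by simp [zero_mem]⟩
  · have h32 : (32 : ℤ) ∣ 2 ^ n := pow_dvd_pow 2 hn
    rw [← exists_isDivisionX_four_iff ha, ← kloostermanCurve.two_pow_succ_dvd_card_point_iff ha,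
      ← Int.natCast_dvd_natCast, card_kloostermanCurve_point hK ha]
    exact (Int.dvd_add_right h32).symm

end KloostermanSum

section MonicOfDegree

variable (F : Type*) [Field F]

/-- Monic polynomials of degree `m` correspond to the vectors of their `m` lower coefficients. -/
noncomputable def monicEquivCoeff (m : ℕ) :
    {g : F[X] // g.Monic ∧ g.natDegree = m} ≃ (Fin m → F) :=
  (monicEquivDegreeLT m).trans (degreeLTEquiv F m).toEquiv

variable {F} in
lemma coeff_monicEquivCoeff_symm {m : ℕ} (v : Fin m → F) (i : Fin m) :
    ((monicEquivCoeff F m).symm v).1.coeff i = v i := by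
  obtain ⟨g, rfl⟩ := (monicEquivCoeff F m).surjective v
  obtain ⟨g, hg, rfl⟩ := g
  rw [Equiv.symm_apply_apply]
  change g.coeff i = g.eraseLead.coeff i
  rw [eraseLead_coeff_of_ne _ i.2.ne]

variable [Fintype F]

/-- The finite set of monic polynomials of degree `m` over a finite field. -/
noncomputable def monicOfDegree (m : ℕ) : Finset F[X] :=
  Finset.univ.map ((monicEquivCoeff F m).symm.toEmbedding.trans (.subtype _))

variable {F}

lemma mem_monicOfDegree {m : ℕ} {g : F[X]} :
    g ∈ monicOfDegree F m ↔ g.Monic ∧ g.natDegree = m := by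
  simp only [monicOfDegree, Finset.mem_map, Finset.mem_univ, true_and,
    Function.Embedding.trans_apply, Equiv.toEmbedding_apply,
    (monicEquivCoeff F m).symm.exists_congr_left, Equiv.symm_symm,
    Equiv.symm_apply_apply, Function.Embedding.subtype_apply, Subtype.exists,
    exists_prop, exists_eq_right]

lemma monicOfDegree_zero : monicOfDegree F 0 = {1} := by
  ext g
  rw [mem_monicOfDegree, Finset.mem_singleton]
  exact ⟨fun ⟨hg, h⟩ => hg.natDegree_eq_zero.1 h, by rintro rfl; simp⟩

lemma sum_monicOfDegree {A : Type*} [AddCommMonoid A] (m : ℕ) (φ : F[X] → A) :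
    ∑ g ∈ monicOfDegree F m, φ g = ∑ v : Fin m → F, φ ((monicEquivCoeff F m).symm v) := by
  rw [monicOfDegree, Finset.sum_map]; rfl

end MonicOfDegree

section VonMangoldt

variable {F : Type*} [Field F]

/-- The function field analogue of the von Mangoldt function: `deg P` at the powers of a prime
`P`, and zero elsewhere. -/
noncomputable def polyVonMangoldt (g : F[X]) : ℕ :=
  if IsPrimePow g then (UniqueFactorizationMonoid.radical g).natDegree else 0

lemma polyVonMangoldt_pow {P : F[X]} (hP : Irreducible P) {k : ℕ} (hk : k ≠ 0) :
    polyVonMangoldt (P ^ k) = P.natDegree := by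
  rw [polyVonMangoldt, if_pos ⟨P, k, hP.prime, hk.bot_lt, rfl⟩,
    UniqueFactorizationMonoid.radical_pow_of_prime hP.prime hk,
    natDegree_eq_of_degree_eq degree_normalize]

lemma exists_monic_irreducible_pow_eq {f : F[X]} (hf : f.Monic) (hpp : IsPrimePow f) :
    ∃ P k, Irreducible P ∧ P.Monic ∧ k ≠ 0 ∧ P ^ k = f := by
  obtain ⟨P, k, hP, hk, rfl⟩ := hpp
  have hmonic : (normalize P).Monic := monic_normalize hP.ne_zero
  exact ⟨normalize P, k, (normalize_associated P).symm.irreducible hP.irreducible, hmonic, hk.ne',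
    eq_of_monic_of_associated (hmonic.pow k) hf (normalize_associated P).pow_pow⟩

lemma eq_and_eq_of_pow_eq_pow {P Q : F[X]} (hP : Irreducible P) (hPm : P.Monic)
    (hQ : Irreducible Q) (hQm : Q.Monic) {k l : ℕ} (hk : k ≠ 0) (h : P ^ k = Q ^ l) :
    P = Q ∧ k = l := by
  have hdvd : P ∣ Q := hP.prime.dvd_of_dvd_pow (h ▸ dvd_pow_self P hk)
  obtain rfl : P = Q := eq_of_monic_of_associated hPm hQm (hP.associated_of_dvd hQ hdvd)
  exact ⟨rfl, pow_injective_of_not_isUnit hP.not_isUnit hP.ne_zero h⟩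

open UniqueFactorizationMonoid in
lemma sum_count_mul_natDegree {g : F[X]} (hg : g.Monic) :
    ∑ P ∈ (normalizedFactors g).toFinset, (normalizedFactors g).count P * P.natDegree =
      g.natDegree := by
  conv_rhs => rw [← hg.normalize_eq_self, ← prod_normalizedFactors_eq hg.ne_zero,
    natDegree_multiset_prod _ (zero_notMem_normalizedFactors g), Finset.sum_multiset_map_count]
  rfl

lemma pow_dvd_iff_le_count {P g : F[X]} (hP : Irreducible P) (hPm : P.Monic) (hg : g ≠ 0) {k : ℕ} :
    P ^ k ∣ g ↔ k ≤ (UniqueFactorizationMonoid.normalizedFactors g).count P := by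
  rw [pow_dvd_iff_le_emultiplicity,
    UniqueFactorizationMonoid.emultiplicity_eq_count_normalizedFactors hP hg,
    hPm.normalize_eq_self, Nat.cast_le]

variable [Fintype F]

/-- The monic divisors of a nonzero polynomial over a finite field. -/
noncomputable def monicDivisors (g : F[X]) : Finset F[X] :=
  ((Finset.range (g.natDegree + 1)).biUnion (monicOfDegree F)).filter (· ∣ g)

lemma mem_monicDivisors {g d : F[X]} (hg : g ≠ 0) : d ∈ monicDivisors g ↔ d.Monic ∧ d ∣ g := by
  simp only [monicDivisors, Finset.mem_filter, Finset.mem_biUnion, Finset.mem_range,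
    mem_monicOfDegree]
  exact ⟨fun ⟨⟨_, _, hd, _⟩, hdg⟩ => ⟨hd, hdg⟩, fun ⟨hd, hdg⟩ =>
    ⟨⟨_, Nat.lt_succ_of_le (natDegree_le_of_dvd hdg hg), hd, rfl⟩, hdg⟩⟩

open UniqueFactorizationMonoid in
lemma filter_isPrimePow_monicDivisors {g : F[X]} (hg : g ≠ 0) :
    (monicDivisors g).filter IsPrimePow =
      ((normalizedFactors g).toFinset.sigma fun P =>
        Finset.Icc 1 ((normalizedFactors g).count P)).image fun x => x.1 ^ x.2 := by
  ext d
  simp only [Finset.mem_filter, mem_monicDivisors hg, Finset.mem_image, Finset.mem_sigma,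
    Multiset.mem_toFinset, Polynomial.mem_normalizedFactors_iff hg, Finset.mem_Icc, Sigma.exists]
  constructor
  · rintro ⟨⟨hd, hdvd⟩, hpp⟩
    obtain ⟨P, k, hirr, hmonic, hk, rfl⟩ := exists_monic_irreducible_pow_eq hd hpp
    exact ⟨P, k, ⟨⟨hirr, hmonic, (dvd_pow_self P hk).trans hdvd⟩, hk.bot_lt,
      (pow_dvd_iff_le_count hirr hmonic hg).1 hdvd⟩, rfl⟩
  · rintro ⟨P, k, ⟨⟨hirr, hmonic, -⟩, hk, hcount⟩, rfl⟩
    exact ⟨⟨hmonic.pow k, (pow_dvd_iff_le_count hirr hmonic hg).2 hcount⟩,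
      P, k, hirr.prime, hk, rfl⟩

open UniqueFactorizationMonoid in
lemma sum_polyVonMangoldt_monicDivisors {g : F[X]} (hg : g.Monic) :
    ∑ d ∈ monicDivisors g, polyVonMangoldt d = g.natDegree := by
  let primePowers := (normalizedFactors g).toFinset.sigma fun P =>
    Finset.Icc 1 ((normalizedFactors g).count P)
  have hmem {x} (hx : x ∈ primePowers) : Irreducible x.1 ∧ x.1.Monic ∧ x.2 ≠ 0 := by
    simp only [primePowers, Finset.mem_sigma, Multiset.mem_toFinset, Finset.mem_Icc,
      Polynomial.mem_normalizedFactors_iff hg.ne_zero] at hx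
    exact ⟨hx.1.1, hx.1.2.1, by lia⟩
  calc ∑ d ∈ monicDivisors g, polyVonMangoldt d
      = ∑ d ∈ primePowers.image fun x => x.1 ^ x.2, polyVonMangoldt d := by
        rw [← filter_isPrimePow_monicDivisors hg.ne_zero, Finset.sum_filter_of_ne]
        exact fun d _ hd => by_contra fun h => hd (if_neg h)
    _ = ∑ x ∈ primePowers, x.1.natDegree := by
        rw [Finset.sum_image]
        · exact Finset.sum_congr rfl fun x hx => polyVonMangoldt_pow (hmem hx).1 (hmem hx).2.2
        · rintro ⟨P, k⟩ hx ⟨Q, l⟩ hy h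
          obtain ⟨rfl, rfl⟩ := eq_and_eq_of_pow_eq_pow (hmem hx).1 (hmem hx).2.1 (hmem hy).1
            (hmem hy).2.1 (hmem hx).2.2 h
          rfl
    _ = ∑ P ∈ (normalizedFactors g).toFinset, (normalizedFactors g).count P * P.natDegree := by
        simp only [primePowers, Finset.sum_sigma, Finset.sum_const, Nat.card_Icc,
          Nat.add_sub_cancel, smul_eq_mul]
    _ = g.natDegree := sum_count_mul_natDegree hg

lemma sum_monicOfDegree_sum_monicDivisors {A : Type*} [AddCommMonoid A] (m : ℕ)
    (φ : F[X] → F[X] → A) :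
    ∑ g ∈ monicOfDegree F m, ∑ d ∈ monicDivisors g, φ g d =
      ∑ ij ∈ Finset.HasAntidiagonal.antidiagonal m,
        ∑ dh ∈ monicOfDegree F ij.1 ×ˢ monicOfDegree F ij.2, φ (dh.1 * dh.2) dh.1 := by
  rw [Finset.sum_sigma', Finset.sum_sigma', eq_comm]
  refine Finset.sum_nbij (fun y => ⟨y.2.1 * y.2.2, y.2.1⟩) ?_ ?_ ?_ fun _ _ => rfl
  · rintro ⟨⟨i, j⟩, ⟨d, h⟩⟩ hy
    simp only [Finset.mem_sigma, Finset.mem_product, mem_monicOfDegree,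
      Finset.HasAntidiagonal.mem_antidiagonal] at hy ⊢
    obtain ⟨hij, ⟨hd, rfl⟩, hh, rfl⟩ := hy
    rw [mem_monicDivisors (hd.mul hh).ne_zero, hd.natDegree_mul hh]
    exact ⟨⟨hd.mul hh, hij⟩, hd, dvd_mul_right d h⟩
  · rintro ⟨⟨i, j⟩, ⟨d, h⟩⟩ hy ⟨⟨i', j'⟩, ⟨d', h'⟩⟩ hy' heq
    simp only [Finset.coe_sigma, Set.mem_sigma_iff, Finset.mem_coe, Finset.mem_product,
      mem_monicOfDegree] at hy hy'
    obtain ⟨-, ⟨hd, rfl⟩, -, rfl⟩ := hy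
    obtain ⟨-, ⟨-, rfl⟩, -, rfl⟩ := hy'
    obtain ⟨hmul, rfl⟩ : d * h = d' * h' ∧ d = d' := by simpa using heq
    rw [mul_left_cancel₀ hd.ne_zero hmul]
  · rintro ⟨g, d⟩ hx
    simp only [Finset.coe_sigma, Set.mem_sigma_iff, Finset.mem_coe, mem_monicOfDegree] at hx
    obtain ⟨⟨hg, rfl⟩, hdiv⟩ := hx
    obtain ⟨hd, h, rfl⟩ := (mem_monicDivisors hg.ne_zero).1 hdiv
    have hh : h.Monic := hd.of_mul_monic_left hg
    refine ⟨⟨(d.natDegree, h.natDegree), (d, h)⟩, ?_, rfl⟩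
    simp only [Finset.coe_sigma, Set.mem_sigma_iff, Finset.mem_coe, Finset.mem_product,
      mem_monicOfDegree, Finset.HasAntidiagonal.mem_antidiagonal]
    exact ⟨(hd.natDegree_mul hh).symm, ⟨hd, trivial⟩, hh, trivial⟩

end VonMangoldt

section LSeries

variable {F : Type*} [Field F] [Fintype F] {R : Type*} [CommRing R]

/-- The `L`-function `∑ χ(g) T ^ deg g`, over monic `g`, of a completely multiplicative function
`χ` on polynomials over a finite field. -/
noncomputable def lSeries (χ : F[X] →* R) : PowerSeries R :=
  PowerSeries.mk fun m => ∑ g ∈ monicOfDegree F m, χ g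

/-- The generating function of the sums `∑ Λ(g) χ(g)` over monic `g` of given degree. -/
noncomputable def vonMangoldtSeries (χ : F[X] →* R) : PowerSeries R :=
  PowerSeries.mk fun m => ∑ g ∈ monicOfDegree F m, polyVonMangoldt g * χ g

lemma X_mul_derivative_lSeries (χ : F[X] →* R) :
    PowerSeries.X * PowerSeries.derivative R (lSeries χ) = vonMangoldtSeries χ * lSeries χ := by
  ext m
  calc _ = ∑ g ∈ monicOfDegree F m, m * χ g := by
        rw [← Finset.mul_sum]
        cases m
        · simp
        · simp [lSeries, PowerSeries.coeff_succ_X_mul, PowerSeries.coeff_derivative, mul_comm]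
    _ = ∑ g ∈ monicOfDegree F m, ∑ d ∈ monicDivisors g, polyVonMangoldt d * χ g := by
        refine Finset.sum_congr rfl fun g hg => ?_
        obtain ⟨hmonic, rfl⟩ := mem_monicOfDegree.1 hg
        rw [← Finset.sum_mul, ← Nat.cast_sum, sum_polyVonMangoldt_monicDivisors hmonic]
    _ = ∑ ij ∈ Finset.HasAntidiagonal.antidiagonal m,
        ∑ dh ∈ monicOfDegree F ij.1 ×ˢ monicOfDegree F ij.2,
          polyVonMangoldt dh.1 * χ (dh.1 * dh.2) :=
        sum_monicOfDegree_sum_monicDivisors m _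
    _ = _ := by
        simp only [PowerSeries.coeff_mul, lSeries, vonMangoldtSeries, PowerSeries.coeff_mk,
          Finset.sum_mul_sum, Finset.sum_product, map_mul, mul_assoc]

lemma derivative_prod_one_sub (s : Multiset R) :
    PowerSeries.derivative R (s.map fun r => 1 - PowerSeries.C r * PowerSeries.X).prod =
      -(PowerSeries.mk fun j => (s.map (· ^ (j + 1))).sum) *
        (s.map fun r => 1 - PowerSeries.C r * PowerSeries.X).prod := by
  induction s using Multiset.induction_on with
  | empty => ext; simp
  | cons r s ih =>
    have hgeom : (PowerSeries.mk fun j => r ^ (j + 1)) *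
        (1 - PowerSeries.C r * PowerSeries.X) = PowerSeries.C r := by
      ext j
      rw [mul_one_sub, mul_left_comm, map_sub, PowerSeries.coeff_C_mul]
      cases j <;> simp [PowerSeries.coeff_succ_mul_X, pow_succ', PowerSeries.coeff_C]
    have hcons : (PowerSeries.mk fun j => ((r ::ₘ s).map (· ^ (j + 1))).sum) =
        (PowerSeries.mk fun j => r ^ (j + 1)) +
          PowerSeries.mk fun j => (s.map (· ^ (j + 1))).sum := by
      ext j
      simp
    have hlinear : PowerSeries.derivative R (1 - PowerSeries.C r * PowerSeries.X) =
        -PowerSeries.C r := by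
      simp
    rw [Multiset.map_cons, Multiset.prod_cons, hcons, Derivation.leibniz, ih, hlinear]
    simp only [smul_eq_mul]
    linear_combination
      (s.map fun r => 1 - PowerSeries.C r * PowerSeries.X).prod * hgeom

theorem sum_polyVonMangoldt_mul_eq [IsDomain R] {χ : F[X] →* R} {s : Multiset R}
    (hs : lSeries χ = (s.map fun r => 1 - PowerSeries.C r * PowerSeries.X).prod) {m : ℕ}
    (hm : m ≠ 0) :
    ∑ g ∈ monicOfDegree F m, polyVonMangoldt g * χ g = -(s.map (· ^ m)).sum := by
  have hne : lSeries χ ≠ 0 := by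
    intro h
    simpa [lSeries, monicOfDegree_zero] using congrArg (PowerSeries.coeff 0) h
  have hseries : vonMangoldtSeries χ =
      -(PowerSeries.X * PowerSeries.mk fun j => (s.map (· ^ (j + 1))).sum) := by
    refine mul_right_cancel₀ hne ?_
    rw [← X_mul_derivative_lSeries, hs, derivative_prod_one_sub]
    ring
  obtain ⟨j, rfl⟩ := Nat.exists_eq_succ_of_ne_zero hm
  simpa [vonMangoldtSeries, PowerSeries.coeff_succ_X_mul] using
    congrArg (PowerSeries.coeff (j + 1)) hseries

end LSeries

section FieldCharpoly

variable (F : Type*) {K : Type*} [Field F] [Field K] [Algebra F K]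

/-- The characteristic polynomial of `a` in a finite field extension `K / F`, that is, of the
multiplication by `a` on `K`, expressed as a power of the minimal polynomial. -/
noncomputable def fieldCharpoly (a : K) : F[X] :=
  minpoly F a ^ (Module.finrank F K / (minpoly F a).natDegree)

variable [FiniteDimensional F K]

lemma finrank_div_natDegree_minpoly_ne_zero (a : K) :
    Module.finrank F K / (minpoly F a).natDegree ≠ 0 :=
  (Nat.div_pos (minpoly.natDegree_le a)
    (minpoly.natDegree_pos (Algebra.IsIntegral.isIntegral a))).ne'

lemma monic_fieldCharpoly (a : K) : (fieldCharpoly F a).Monic :=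
  (minpoly.monic (Algebra.IsIntegral.isIntegral a)).pow _

lemma natDegree_fieldCharpoly (a : K) : (fieldCharpoly F a).natDegree = Module.finrank F K := by
  rw [fieldCharpoly, natDegree_pow,
    Nat.div_mul_cancel (minpoly.degree_dvd (Algebra.IsIntegral.isIntegral a))]

variable {F} in
lemma fieldCharpoly_eq_pow_iff {P : F[X]} (hP : Irreducible P) (hPm : P.Monic) {k : ℕ}
    (hk : (P ^ k).natDegree = Module.finrank F K) {a : K} :
    fieldCharpoly F a = P ^ k ↔ minpoly F a = P := by
  have hint : IsIntegral F a := Algebra.IsIntegral.isIntegral a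
  refine ⟨fun h => (eq_and_eq_of_pow_eq_pow (minpoly.irreducible hint) (minpoly.monic hint) hP hPm
    (finrank_div_natDegree_minpoly_ne_zero F a) h).1, ?_⟩
  rintro rfl
  rw [fieldCharpoly, ← hk, natDegree_pow, Nat.mul_div_cancel _ (minpoly.natDegree_pos hint)]

open UniqueFactorizationMonoid in
variable {F} in
lemma eq_minpoly_pow {f : F[X]} (hf : f.Monic) {a : K}
    (h : ∀ P : F[X], Irreducible P → P.Monic → P ∣ f → P = minpoly F a) :
    f = minpoly F a ^ (f.natDegree / (minpoly F a).natDegree) := by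
  obtain ⟨k, hk⟩ : ∃ k, f = minpoly F a ^ k := by
    have hrep := Multiset.eq_replicate_card.2 fun P (hP : P ∈ normalizedFactors f) =>
      have ⟨hirr, hmonic, hdvd⟩ := (Polynomial.mem_normalizedFactors_iff hf.ne_zero).1 hP
      h P hirr hmonic hdvd
    refine ⟨(normalizedFactors f).card, ?_⟩
    rw [← Multiset.prod_replicate, ← hrep, prod_normalizedFactors_eq hf.ne_zero,
      hf.normalize_eq_self]
  rw [hk, natDegree_pow, Nat.mul_div_cancel _
    (minpoly.natDegree_pos (Algebra.IsIntegral.isIntegral a))]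

lemma map_fieldCharpoly_eq_charpoly [IsGalois F K] (a : K) :
    (fieldCharpoly F a).map (algebraMap F K) = MulSemiringAction.charpoly Gal(K/F) a := by
  obtain ⟨f, hfmap, hfdeg, hf⟩ := lifts_and_natDegree_eq_and_monic
    (Algebra.IsInvariant.charpoly_mem_lifts F K Gal(K/F) a)
    (MulSemiringAction.monic_charpoly Gal(K/F) a)
  have hdeg : f.natDegree = Module.finrank F K := by
    rw [hfdeg, MulSemiringAction.charpoly_eq,
      natDegree_prod_of_monic _ _ fun σ _ => monic_X_sub_C _]
    simp [← IsGalois.card_aut_eq_finrank]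
  rw [← hfmap, fieldCharpoly, ← hdeg, ← eq_minpoly_pow hf]
  intro P hP hPm hPf
  have hdvd : P.map (algebraMap F K) ∣ MulSemiringAction.charpoly Gal(K/F) a :=
    hfmap ▸ Polynomial.map_dvd _ hPf
  obtain ⟨b, hb⟩ := ((MulSemiringAction.splits_charpoly Gal(K/F) a).of_dvd
    (MulSemiringAction.monic_charpoly Gal(K/F) a).ne_zero hdvd).exists_eval_eq_zero
      (by rw [degree_map]; exact (degree_pos_of_irreducible hP).ne')
  obtain ⟨σ, hσ⟩ : ∃ σ : Gal(K/F), b = σ a := by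
    have := eval_eq_zero_of_dvd_of_eval_eq_zero hdvd hb
    simpa [MulSemiringAction.charpoly_eq, eval_prod, Finset.prod_eq_zero_iff, sub_eq_zero]
      using this
  rw [eval_map_algebraMap, hσ] at hb
  rw [← minpoly.algEquiv_eq σ a]
  exact minpoly.eq_of_irreducible_of_monic hP hb hPm

end FieldCharpoly

section FiniteField

variable (F : Type*) {K : Type*} [Field F] [Field K] [Algebra F K]

lemma map_fieldCharpoly_eq_prod [Fintype F] [Finite K] (a : K) :
    (fieldCharpoly F a).map (algebraMap F K) =
      ∏ i ∈ Finset.range (Module.finrank F K), (X - C (a ^ Fintype.card F ^ i)) := by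
  rw [map_fieldCharpoly_eq_charpoly, MulSemiringAction.charpoly_eq, ← Fin.prod_univ_eq_prod_range,
    ← (FiniteField.bijective_frobeniusAlgEquivOfAlgebraic_pow F K).prod_comp]
  refine Finset.prod_congr rfl fun i _ => ?_
  rw [AlgEquiv.smul_def, AlgEquiv.coe_pow, FiniteField.coe_frobeniusAlgEquivOfAlgebraic_iterate]

lemma coeff_reverse_fieldCharpoly [Fintype F] [Finite K] (a : K) {k : ℕ}
    (hk : k ≤ Module.finrank F K) :
    algebraMap F K ((fieldCharpoly F a).reverse.coeff k) =
      (-1) ^ k * traceFn (Fintype.card F) (Module.finrank F K) k a := by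
  rw [coeff_reverse, natDegree_fieldCharpoly, revAt_le hk, ← coeff_map, map_fieldCharpoly_eq_prod]
  simp_rw [sub_eq_add_neg, ← map_neg C]
  rw [Finset.prod_X_add_C_coeff _ _ (by simp), Finset.card_range, Nat.sub_sub_self hk,
    traceFn, Finset.mul_sum]
  refine Finset.sum_congr rfl fun S hS => ?_
  rw [Finset.prod_neg, (Finset.mem_powersetCard.1 hS).2]

variable {F} [Fintype K]

lemma card_minpoly_eq {P : F[X]} (hP : Irreducible P) (hPm : P.Monic)
    (hdvd : P.natDegree ∣ Module.finrank F K) :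
    Finset.card {a : K | minpoly F a = P} = P.natDegree := by
  have : Finite F := .of_injective _ (algebraMap F K).injective
  have hcard : Nat.card F ^ Module.finrank F K = Fintype.card K := by
    rw [← Module.natCard_eq_pow_finrank, Nat.card_eq_fintype_card]
  have hdvd := Polynomial.map_dvd (algebraMap F K)
    (hP.natDegree_dvd_iff_dvd_X_pow_card_pow_sub_X.1 hdvd)
  rw [hcard, Polynomial.map_sub, Polynomial.map_pow, map_X] at hdvd
  have hsplits : (X ^ Fintype.card K - X : K[X]).Splits := by
    rw [splits_iff_card_roots, FiniteField.roots_X_pow_card_sub_X,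
      FiniteField.X_pow_card_sub_X_natDegree_eq K Fintype.one_lt_card]
    rfl
  rw [← card_rootSet_eq_natDegree (PerfectField.separable_of_irreducible hP) (hsplits.of_dvd
    (FiniteField.X_pow_card_sub_X_ne_zero K Fintype.one_lt_card) hdvd), ← Set.toFinset_card]
  congr 1
  ext a
  simp only [Finset.mem_filter, Finset.mem_univ, true_and, Set.mem_toFinset, mem_rootSet]
  constructor
  · rintro rfl
    exact ⟨hP.ne_zero, minpoly.aeval F a⟩
  · rintro ⟨-, h⟩
    exact (minpoly.eq_of_irreducible_of_monic hP h hPm).symm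

lemma card_fieldCharpoly_eq {f : F[X]} (hf : f.Monic)
    (hdeg : f.natDegree = Module.finrank F K) :
    Finset.card {a : K | fieldCharpoly F a = f} = polyVonMangoldt f := by
  by_cases hpp : IsPrimePow f
  · obtain ⟨P, k, hP, hPm, hk, rfl⟩ := exists_monic_irreducible_pow_eq hf hpp
    simp_rw [fieldCharpoly_eq_pow_iff hP hPm hdeg]
    rw [card_minpoly_eq hP hPm ⟨k, by rw [← hdeg, natDegree_pow, mul_comm]⟩,
      polyVonMangoldt_pow hP hk]
  · rw [polyVonMangoldt, if_neg hpp, Finset.card_eq_zero, Finset.filter_eq_empty_iff]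
    rintro a - rfl
    exact hpp ⟨_, _, (minpoly.irreducible (Algebra.IsIntegral.isIntegral a)).prime,
      (finrank_div_natDegree_minpoly_ne_zero F a).bot_lt, rfl⟩

theorem sum_fieldCharpoly [Fintype F] {R : Type*} [CommSemiring R] (φ : F[X] → R) :
    ∑ a : K, φ (fieldCharpoly F a) =
      ∑ f ∈ monicOfDegree F (Module.finrank F K), polyVonMangoldt f * φ f := by
  rw [← Finset.sum_fiberwise_of_maps_to (t := monicOfDegree F (Module.finrank F K))
    (g := fieldCharpoly F) fun a _ =>
      mem_monicOfDegree.2 ⟨monic_fieldCharpoly F a, natDegree_fieldCharpoly F a⟩]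
  refine Finset.sum_congr rfl fun f hf => ?_
  obtain ⟨hf, hdeg⟩ := mem_monicOfDegree.1 hf
  rw [← card_fieldCharpoly_eq hf hdeg, ← nsmul_eq_mul, ← Finset.sum_const]
  exact Finset.sum_congr rfl fun a ha => by rw [(Finset.mem_filter.1 ha).2]

end FiniteField

section CoeffLog

/-- A homomorphism to `ℤ/8` from the multiplicative group of the truncated power series
`1 + e₁X + e₂X² + e₃X³ + e₄X⁴` modulo `X⁵` over `𝔽₂`. That group is the product of the cyclic groups
generated by `1 + X`, which is sent to `1`, and by `1 + X³`, which is sent to `0`. -/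
def truncatedLog (e₁ e₂ e₃ e₄ : ZMod 2) : ZMod 8 :=
  (e₁.val + 2 * e₂.val + 4 * (e₄.val + e₁.val * e₂.val + e₁.val * e₃.val) : ℕ)

lemma truncatedLog_mul : ∀ a₁ a₂ a₃ a₄ b₁ b₂ b₃ b₄ : ZMod 2,
    truncatedLog (b₁ + a₁) (b₂ + a₁ * b₁ + a₂) (b₃ + a₁ * b₂ + a₂ * b₁ + a₃)
        (b₄ + a₁ * b₃ + a₂ * b₂ + a₃ * b₁ + a₄) =
      truncatedLog a₁ a₂ a₃ a₄ + truncatedLog b₁ b₂ b₃ b₄ := by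
  decide

lemma truncatedLog_eq_zero_iff : ∀ {e₁ e₂ e₃ e₄ : ZMod 2},
    truncatedLog e₁ e₂ e₃ e₄ = 0 ↔ e₁ = 0 ∧ e₂ = 0 ∧ e₄ = 0 := by
  decide

/-- `truncatedLog` of the residue modulo `X⁵` of a polynomial with constant coefficient `1`. -/
noncomputable def coeffLog (f : (ZMod 2)[X]) : ZMod 8 :=
  truncatedLog (f.coeff 1) (f.coeff 2) (f.coeff 3) (f.coeff 4)

lemma coeffLog_one : coeffLog 1 = 0 := by
  simp [coeffLog, coeff_one, truncatedLog]

lemma coeffLog_mul {f g : (ZMod 2)[X]} (hf : f.coeff 0 = 1) (hg : g.coeff 0 = 1) :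
    coeffLog (f * g) = coeffLog f + coeffLog g := by
  simp only [coeffLog, coeff_mul, Finset.Nat.sum_antidiagonal_eq_sum_range_succ_mk,
    Finset.sum_range_succ, Finset.sum_range_zero, hf, hg, ← truncatedLog_mul]
  norm_num

end CoeffLog

section RevLogChar

lemma monic_of_ne_zero {f : (ZMod 2)[X]} (hf : f ≠ 0) : f.Monic := by
  have : ∀ c : ZMod 2, c ≠ 0 → c = 1 := by decide
  exact this _ (leadingCoeff_ne_zero.2 hf)

variable {R : Type*} [CommRing R]

/-- The character of `𝔽₂[X]` obtained from the character `ψ` of `ℤ/8` by applying `truncatedLog` to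
the leading five coefficients of a polynomial. -/
noncomputable def revLogChar (ψ : AddChar (ZMod 8) R) : (ZMod 2)[X] →* R where
  toFun f := if f = 0 then 0 else ψ (coeffLog f.reverse)
  map_one' := by
    rw [if_neg one_ne_zero, ← C_1, reverse_C, C_1, coeffLog_one, AddChar.map_zero_eq_one]
  map_mul' f g := by
    rcases eq_or_ne f 0 with rfl | hf
    · simp
    rcases eq_or_ne g 0 with rfl | hg
    · simp
    have coeff_zero {h : (ZMod 2)[X]} (hh : h ≠ 0) : h.reverse.coeff 0 = 1 := by
      rw [coeff_zero_reverse, monic_of_ne_zero hh]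
    rw [if_neg (mul_ne_zero hf hg), if_neg hf, if_neg hg, reverse_mul_of_domain,
      coeffLog_mul (coeff_zero hf) (coeff_zero hg), AddChar.map_add_eq_mul]

lemma revLogChar_apply (ψ : AddChar (ZMod 8) R) {f : (ZMod 2)[X]} (hf : f ≠ 0) :
    revLogChar ψ f = ψ (coeffLog f.reverse) :=
  if_neg hf

/-- Extension of a vector by zero to a sequence. -/
def extendZero {m : ℕ} (v : Fin m → ZMod 2) (k : ℕ) : ZMod 2 :=
  if h : k < m then v ⟨k, h⟩ else 0

/-- The value of `coeffLog` at `1 + v₀X + v₁X² + ⋯`. -/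
def vecLog {m : ℕ} (v : Fin m → ZMod 2) : ZMod 8 :=
  truncatedLog (extendZero v 0) (extendZero v 1) (extendZero v 2) (extendZero v 3)

lemma coeff_reverse_monicEquivCoeff_symm {m : ℕ} (v : Fin m → ZMod 2) (k : ℕ) :
    ((monicEquivCoeff (ZMod 2) m).symm (v ∘ Fin.rev)).1.reverse.coeff (k + 1) =
      extendZero v k := by
  have hdeg := ((monicEquivCoeff (ZMod 2) m).symm (v ∘ Fin.rev)).2.2
  rw [coeff_reverse, hdeg, extendZero]
  split_ifs with h
  · rw [revAt_le (by omega)]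
    exact (coeff_monicEquivCoeff_symm (v ∘ Fin.rev) (Fin.rev ⟨k, h⟩)).trans
      (congrArg v (Fin.rev_rev _))
  · rw [revAt_eq_self_of_lt (by omega), coeff_eq_zero_of_natDegree_lt (by omega)]

lemma coeffLog_reverse_monicEquivCoeff_symm {m : ℕ} (v : Fin m → ZMod 2) :
    coeffLog ((monicEquivCoeff (ZMod 2) m).symm (v ∘ Fin.rev)).1.reverse = vecLog v := by
  rw [vecLog]
  simp only [← coeff_reverse_monicEquivCoeff_symm, coeffLog, Nat.reduceAdd]

lemma coeff_lSeries_revLogChar (ψ : AddChar (ZMod 8) R) (m : ℕ) :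
    PowerSeries.coeff m (lSeries (revLogChar ψ)) = ∑ v : Fin m → ZMod 2, ψ (vecLog v) := by
  rw [lSeries, PowerSeries.coeff_mk, sum_monicOfDegree,
    ← (Equiv.arrowCongr Fin.revPerm (Equiv.refl (ZMod 2))).sum_comp]
  refine Finset.sum_congr rfl fun v _ => ?_
  rw [← coeffLog_reverse_monicEquivCoeff_symm]
  exact revLogChar_apply _ ((monicEquivCoeff (ZMod 2) m).symm (v ∘ Fin.rev)).2.1.ne_zero

lemma coeff_lSeries_revLogChar_of_map_eq (ψ : AddChar (ZMod 8) R) {m : ℕ} {s : Multiset (ZMod 8)}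
    (hs : (Finset.univ : Finset (Fin m → ZMod 2)).val.map vecLog = s) :
    PowerSeries.coeff m (lSeries (revLogChar ψ)) = (s.map ψ).sum := by
  rw [coeff_lSeries_revLogChar, ← hs, Multiset.map_map]
  rfl

/-- The polynomial whose reverse is the `L`-series of `revLogChar ψ`, for nontrivial `ψ`. -/
noncomputable def revLPolynomial (ψ : AddChar (ZMod 8) R) : R[X] :=
  Cubic.toPoly ⟨1, 1 + ψ 1, 1 + ψ 1 + ψ 2 + ψ 7, 2 + ψ 1 + 2 * ψ 2 + ψ 3 + ψ 5 + ψ 7⟩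

lemma monic_revLPolynomial (ψ : AddChar (ZMod 8) R) : (revLPolynomial ψ).Monic :=
  Cubic.monic_of_a_eq_one rfl

variable [IsDomain R]

lemma card_vecLog_eq : ∀ t : ZMod 8, Finset.card {e : Fin 4 → ZMod 2 | vecLog e = t} = 2 := by
  decide

lemma sum_vecLog {ψ : AddChar (ZMod 8) R} (hψ : ψ ≠ 1) :
    ∑ e : Fin 4 → ZMod 2, ψ (vecLog e) = 0 := by
  rw [← Finset.sum_fiberwise Finset.univ vecLog]
  calc ∑ t : ZMod 8, ∑ e : Fin 4 → ZMod 2 with vecLog e = t, ψ (vecLog e)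
      = ∑ t : ZMod 8, 2 • ψ t := Finset.sum_congr rfl fun t _ => by
        rw [Finset.sum_congr rfl fun e he => by rw [(Finset.mem_filter.1 he).2], Finset.sum_const]
        congr 1
        convert card_vecLog_eq t
    _ = 0 := by rw [← Finset.smul_sum, AddChar.sum_eq_zero_of_ne_one hψ, smul_zero]

lemma coeff_lSeries_revLogChar_add_four {ψ : AddChar (ZMod 8) R} (hψ : ψ ≠ 1) (m : ℕ) :
    PowerSeries.coeff (4 + m) (lSeries (revLogChar ψ)) = 0 := by
  rw [coeff_lSeries_revLogChar, ← (Fin.appendEquiv 4 m).sum_comp, Fintype.sum_prod_type_right]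
  refine Finset.sum_eq_zero fun u _ => ?_
  rw [← sum_vecLog hψ]
  refine Finset.sum_congr rfl fun e _ => ?_
  have hext (k : Fin 4) : extendZero (Fin.appendEquiv 4 m (e, u)) k = extendZero e k := by
    rw [extendZero, extendZero, dif_pos k.2, dif_pos (by omega)]
    exact Fin.append_left e u k
  exact congrArg ψ (congr (congr (congr (congrArg _ (hext 0)) (hext 1)) (hext 2)) (hext 3))

theorem lSeries_revLogChar {ψ : AddChar (ZMod 8) R} (hψ : ψ ≠ 1) :
    lSeries (revLogChar ψ) = (revLPolynomial ψ).reverse := by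
  have hdeg : (revLPolynomial ψ).natDegree = 3 := Cubic.natDegree_of_a_ne_zero one_ne_zero
  ext m
  rw [Polynomial.coeff_coe, coeff_reverse, hdeg]
  obtain hm | hm := le_or_gt 4 m
  · obtain ⟨m, rfl⟩ := Nat.exists_eq_add_of_le hm
    rw [coeff_lSeries_revLogChar_add_four hψ, revAt_eq_self_of_lt (by omega),
      coeff_eq_zero_of_natDegree_lt (by omega)]
  rw [revAt_le (by omega)]
  interval_cases m
  · rw [coeff_lSeries_revLogChar_of_map_eq ψ (s := {0}) (by decide)]
    simp [revLPolynomial]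
  · rw [coeff_lSeries_revLogChar_of_map_eq ψ (s := {0, 1}) (by decide)]
    simp [revLPolynomial]
  · rw [coeff_lSeries_revLogChar_of_map_eq ψ (s := {0, 1, 2, 7}) (by decide)]
    simp [revLPolynomial, add_assoc]
  · rw [coeff_lSeries_revLogChar_of_map_eq ψ (s := {0, 0, 1, 2, 2, 3, 5, 7}) (by decide)]
    simp only [Multiset.insert_eq_cons, Multiset.map_cons, Multiset.map_singleton,
      Multiset.sum_cons, Multiset.sum_singleton, AddChar.map_zero_eq_one, revLPolynomial,
      Nat.sub_self, Cubic.coeff_eq_d]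
    ring

end RevLogChar

section RootPowerSum

lemma reverse_X_sub_C {R : Type*} [CommRing R] [Nontrivial R] (r : R) :
    (X - C r).reverse = 1 - C r * X := by
  have hX : (X : R[X]).reverse = 1 := by rw [← one_mul X, reverse_mul_X, ← C_1, reverse_C]
  rw [sub_eq_add_neg, ← C_neg, reverse_add_C, natDegree_X, pow_one, hX, C_neg, neg_mul,
    ← sub_eq_add_neg]

variable {R : Type*} [CommRing R] [IsDomain R]

/-- The sum of the `n`-th powers of the roots of `p`, counted with multiplicity. -/
noncomputable def rootPowerSum (n : ℕ) (p : R[X]) : R := (p.roots.map (· ^ n)).sum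

lemma rho_eq_rootPowerSum (n : ℕ) (γ : ℤ[X]) :
    rho n γ = rootPowerSum n (γ.map (Int.castRingHom ℂ)) :=
  rfl

lemma rootPowerSum_mul (n : ℕ) {p q : R[X]} (h : p * q ≠ 0) :
    rootPowerSum n (p * q) = rootPowerSum n p + rootPowerSum n q := by
  rw [rootPowerSum, roots_mul h, Multiset.map_add, Multiset.sum_add, ← rootPowerSum,
    ← rootPowerSum]

lemma rootPowerSum_prod {ι : Type*} (n : ℕ) {s : Finset ι} {f : ι → R[X]}
    (h : ∏ i ∈ s, f i ≠ 0) :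
    rootPowerSum n (∏ i ∈ s, f i) = ∑ i ∈ s, rootPowerSum n (f i) := by
  rw [rootPowerSum, roots_prod _ _ h, Multiset.map_bind, Multiset.sum_bind]
  rfl

lemma rootPowerSum_X_pow {n : ℕ} (hn : n ≠ 0) (k : ℕ) : rootPowerSum n (X ^ k : R[X]) = 0 := by
  rw [rootPowerSum, roots_X_pow, Multiset.map_nsmul, Multiset.map_singleton, zero_pow hn,
    Multiset.sum_nsmul, Multiset.sum_singleton, nsmul_zero]

lemma reverse_prod_X_sub_C (s : Multiset R) :
    ((s.map fun r => X - C r).prod.reverse : PowerSeries R) =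
      (s.map fun r => 1 - PowerSeries.C r * PowerSeries.X).prod := by
  induction s using Multiset.induction_on with
  | empty => rw [Multiset.map_zero, Multiset.prod_zero, ← C_1, reverse_C]; simp
  | cons r s ih =>
    rw [Multiset.map_cons, Multiset.prod_cons, reverse_mul_of_domain, Polynomial.coe_mul, ih,
      reverse_X_sub_C, Multiset.map_cons, Multiset.prod_cons]
    simp

variable {F K : Type*} [Field F] [Fintype F] [Field K] [Fintype K] [Algebra F K]

theorem sum_fieldCharpoly_eq_neg_rootPowerSum {χ : F[X] →* R} {γ : R[X]} (hγ : γ.Monic)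
    (hsplits : γ.Splits) (h : lSeries χ = γ.reverse) :
    ∑ a : K, χ (fieldCharpoly F a) = -rootPowerSum (Module.finrank F K) γ := by
  rw [hsplits.eq_prod_roots_of_monic hγ, reverse_prod_X_sub_C] at h
  rw [sum_fieldCharpoly, sum_polyVonMangoldt_mul_eq h Module.finrank_pos.ne', rootPowerSum]

end RootPowerSum

section KloostermanCount

lemma sum_revLogChar_mulShift_stdAddChar {f : (ZMod 2)[X]} (hf : f ≠ 0) :
    ∑ j : ZMod 8, revLogChar (ZMod.stdAddChar.mulShift j) f =
      if coeffLog f.reverse = 0 then (8 : ℂ) else 0 := by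
  simp_rw [revLogChar_apply _ hf, AddChar.mulShift_apply]
  rw [AddChar.sum_mulShift _ (ZMod.isPrimitive_stdAddChar 8), ZMod.card]
  push_cast
  congr 1

lemma stdAddChar_four : (ZMod.stdAddChar (4 : ZMod 8) : ℂ) = -1 := by
  have hne : (ZMod.stdAddChar (4 : ZMod 8) : ℂ) ≠ 1 := by
    rw [← AddChar.map_zero_eq_one (ZMod.stdAddChar (N := 8)), ZMod.injective_stdAddChar.ne_iff]
    decide
  refine (sq_eq_one_iff.1 ?_).resolve_left hne
  rw [← AddChar.map_nsmul_eq_pow, ← AddChar.map_zero_eq_one (ZMod.stdAddChar (N := 8))]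
  rfl

section Product

variable {R : Type*} [CommRing R]

lemma revLPolynomial_mulShift (ψ : AddChar (ZMod 8) R) (j : ZMod 8) :
    revLPolynomial (ψ.mulShift j) = X ^ 3 + (1 + C (ψ j)) * X ^ 2 +
      (1 + C (ψ j) + C (ψ j) ^ 2 + C (ψ j) ^ 7) * X +
        (2 + C (ψ j) + 2 * C (ψ j) ^ 2 + C (ψ j) ^ 3 + C (ψ j) ^ 5 + C (ψ j) ^ 7) := by
  have hpow (k : ℕ) : ψ.mulShift j k = ψ j ^ k := by
    rw [AddChar.mulShift_apply, mul_comm, ← nsmul_eq_mul, AddChar.map_nsmul_eq_pow]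
  have h1 := hpow 1
  have h2 := hpow 2
  have h3 := hpow 3
  have h5 := hpow 5
  have h7 := hpow 7
  push_cast at h1 h2 h3 h5 h7
  simp [revLPolynomial, Cubic.toPoly, h1, h2, h3, h5, h7, show C (2 : R) = 2 from rfl]

lemma revLPolynomial_mulShift_of_pow_four {ψ : AddChar (ZMod 8) R} {j : ZMod 8}
    (hj : ψ j ^ 4 = -1) :
    revLPolynomial (ψ.mulShift j) = X ^ 3 + (1 + C (ψ j)) * X ^ 2 +
      (1 + C (ψ j) + C (ψ j) ^ 2 - C (ψ j) ^ 3) * X + (2 + 2 * C (ψ j) ^ 2) := by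
  have hz : C (ψ j) ^ 4 = (-1 : R[X]) := by rw [← C_pow, hj, C_neg, C_1]
  rw [revLPolynomial_mulShift]
  linear_combination (C (ψ j) ^ 3 * X + C (ψ j) + C (ψ j) ^ 3) * hz

section FourIsNegOne

variable {ψ : AddChar (ZMod 8) R} (hψ : ψ 4 = -1)
include hψ

lemma revLPolynomial_mulShift_four : revLPolynomial (ψ.mulShift 4) = X ^ 3 := by
  rw [revLPolynomial_mulShift, hψ, C_neg, C_1]
  ring

lemma revLPolynomial_mulShift_two_mul_six :
    revLPolynomial (ψ.mulShift 2) * revLPolynomial (ψ.mulShift 6) =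
      X ^ 4 * d21.map (Int.castRingHom R) := by
  have h6 : ψ 6 = -ψ 2 := by
    rw [show (6 : ZMod 8) = 4 + 2 by decide, AddChar.map_add_eq_mul, hψ, neg_one_mul]
  have hz : C (ψ 2) ^ 2 = (-1 : R[X]) := by
    rw [← C_pow, ← AddChar.map_nsmul_eq_pow, show 2 • (2 : ZMod 8) = 4 by decide, hψ, C_neg, C_1]
  simp only [revLPolynomial_mulShift, h6, C_neg, d21, Polynomial.map_add, Polynomial.map_mul,
    Polynomial.map_pow, map_X, Polynomial.map_ofNat]
  grind

lemma prod_revLPolynomial_mulShift_odd :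
    revLPolynomial (ψ.mulShift 1) * revLPolynomial (ψ.mulShift 5) *
        (revLPolynomial (ψ.mulShift 3) * revLPolynomial (ψ.mulShift 7)) =
      d22.map (Int.castRingHom R) ^ 2 * d81.map (Int.castRingHom R) := by
  have hpow (j : ZMod 8) (k : ℕ) : ψ j ^ k = ψ (k • j) := (AddChar.map_nsmul_eq_pow ψ k j).symm
  have h3 : ψ 3 = ψ 1 ^ 3 := by rw [hpow]; rfl
  have h5 : ψ 5 = -ψ 1 := by
    rw [show (5 : ZMod 8) = 4 + 1 by decide, AddChar.map_add_eq_mul, hψ, neg_one_mul]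
  have h7 : ψ 7 = -ψ 1 ^ 3 := by
    rw [← h3, show (7 : ZMod 8) = 4 + 3 by decide, AddChar.map_add_eq_mul, hψ, neg_one_mul]
  have hfour {j : ZMod 8} (hj : 4 • j = 4) : ψ j ^ 4 = -1 := by rw [hpow, hj, hψ]
  rw [revLPolynomial_mulShift_of_pow_four (hfour (j := 1) (by decide)),
    revLPolynomial_mulShift_of_pow_four (hfour (j := 3) (by decide)),
    revLPolynomial_mulShift_of_pow_four (hfour (j := 5) (by decide)),
    revLPolynomial_mulShift_of_pow_four (hfour (j := 7) (by decide))]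
  have hz : C (ψ 1) ^ 4 = (-1 : R[X]) := by rw [← C_pow, hfour (by decide), C_neg, C_1]
  simp only [h3, h5, h7, C_neg, C_pow, d22, d81, Polynomial.map_add, Polynomial.map_mul,
    Polynomial.map_pow, map_X, Polynomial.map_ofNat]
  generalize C (ψ 1) = z at hz
  clear h3 h5 h7
  grind

lemma prod_revLPolynomial_mulShift :
    ∏ j : ZMod 8 with j ≠ 0, revLPolynomial (ψ.mulShift j) =
      X ^ 7 * (d21.map (Int.castRingHom R) * (d22.map (Int.castRingHom R) ^ 2 *
        d81.map (Int.castRingHom R))) := by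
  rw [show ({j | j ≠ 0} : Finset (ZMod 8)) = {4, 2, 6, 1, 5, 3, 7} by decide]
  calc ∏ j ∈ {4, 2, 6, 1, 5, 3, 7}, revLPolynomial (ψ.mulShift j)
      = revLPolynomial (ψ.mulShift 4) *
          (revLPolynomial (ψ.mulShift 2) * revLPolynomial (ψ.mulShift 6)) *
          (revLPolynomial (ψ.mulShift 1) * revLPolynomial (ψ.mulShift 5) *
            (revLPolynomial (ψ.mulShift 3) * revLPolynomial (ψ.mulShift 7))) := by
        repeat rw [Finset.prod_insert (by decide)]
        rw [Finset.prod_singleton]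
        ring
    _ = _ := by
        rw [revLPolynomial_mulShift_four hψ, revLPolynomial_mulShift_two_mul_six hψ,
          prod_revLPolynomial_mulShift_odd hψ]
        ring

end FourIsNegOne

end Product

variable {K : Type} [Field K] [Fintype K]

lemma thirtyTwo_dvd_kloosterman_iff_coeffLog [Algebra (ZMod 2) K] {n : ℕ}
    (hK : Fintype.card K = 2 ^ n) (hn : 5 ≤ n) (a : K) :
    32 ∣ kloosterman n K a ↔ coeffLog (fieldCharpoly (ZMod 2) a).reverse = 0 := by
  have : CharP K 2 := charP_of_injective_algebraMap (algebraMap (ZMod 2) K).injective 2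
  have hrank := finrank_zmod_of_card_eq hK
  have htrace {k : ℕ} (hk : k ≤ n) :
      (fieldCharpoly (ZMod 2) a).reverse.coeff k = 0 ↔ traceFn 2 n k a = 0 := by
    have h := coeff_reverse_fieldCharpoly (ZMod 2) a (hk.trans_eq hrank.symm)
    rw [CharTwo.neg_eq, one_pow, one_mul, ZMod.card, hrank] at h
    rw [← h, map_eq_zero]
  rw [thirtyTwo_dvd_kloosterman_iff hK hn, coeffLog, truncatedLog_eq_zero_iff,
    htrace (by omega), htrace (by omega), htrace (by omega)]

lemma eight_mul_card_thirtyTwo_dvd_kloosterman [Algebra (ZMod 2) K] {n : ℕ}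
    (hK : Fintype.card K = 2 ^ n) (hn : 5 ≤ n) :
    8 * (Nat.card {a : K // 32 ∣ kloosterman n K a} : ℂ) = ∑ j : ZMod 8, ∑ a : K,
      revLogChar (ZMod.stdAddChar.mulShift j) (fieldCharpoly (ZMod 2) a) := by
  rw [Finset.sum_comm]
  simp_rw [sum_revLogChar_mulShift_stdAddChar (monic_fieldCharpoly (ZMod 2) _).ne_zero,
    ← thirtyTwo_dvd_kloosterman_iff_coeffLog hK hn]
  rw [Finset.sum_ite, Finset.sum_const, Finset.sum_const_zero, add_zero, nsmul_eq_mul, mul_comm,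
    Nat.card_eq_fintype_card, Fintype.card_subtype]

lemma sum_revLogChar_one_fieldCharpoly (R : Type*) [CommRing R] [Algebra (ZMod 2) K] :
    ∑ a : K, revLogChar (1 : AddChar (ZMod 8) R) (fieldCharpoly (ZMod 2) a) = Fintype.card K := by
  simp [revLogChar_apply _ (monic_fieldCharpoly (ZMod 2) _).ne_zero]

lemma sum_revLogChar_fieldCharpoly {R : Type*} [Field R] [IsAlgClosed R] [Algebra (ZMod 2) K]
    {ψ : AddChar (ZMod 8) R} (hψ : ψ ≠ 1) :
    ∑ a : K, revLogChar ψ (fieldCharpoly (ZMod 2) a) =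
      -rootPowerSum (Module.finrank (ZMod 2) K) (revLPolynomial ψ) :=
  sum_fieldCharpoly_eq_neg_rootPowerSum (monic_revLPolynomial ψ) (IsAlgClosed.splits _)
    (lSeries_revLogChar hψ)

lemma sum_rootPowerSum_revLPolynomial {n : ℕ} (hn : n ≠ 0) :
    ∑ j : ZMod 8 with j ≠ 0, rootPowerSum n (revLPolynomial (ZMod.stdAddChar.mulShift j)) =
      rho n d21 + 2 * rho n d22 + rho n d81 := by
  have hne : ∏ j : ZMod 8 with j ≠ 0,
      revLPolynomial ((ZMod.stdAddChar (N := 8)).mulShift j) ≠ 0 :=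
    Finset.prod_ne_zero_iff.2 fun j _ => (monic_revLPolynomial _).ne_zero
  rw [← rootPowerSum_prod n hne]
  rw [prod_revLPolynomial_mulShift stdAddChar_four, sq] at hne ⊢
  rw [rootPowerSum_mul n hne, rootPowerSum_X_pow hn,
    rootPowerSum_mul n (right_ne_zero_of_mul hne),
    rootPowerSum_mul n (right_ne_zero_of_mul (right_ne_zero_of_mul hne)),
    rootPowerSum_mul n (left_ne_zero_of_mul (right_ne_zero_of_mul (right_ne_zero_of_mul hne))),
    rho_eq_rootPowerSum, rho_eq_rootPowerSum, rho_eq_rootPowerSum]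
  ring

end KloostermanCount

theorem statement17 (n : ℕ) (hn : 5 ≤ n)
    (K : Type) [Field K] [Fintype K] (hK : Fintype.card K = 2 ^ n) :
    (Nat.card {a : K // (32 : ℤ) ∣ kloosterman n K a} : ℂ)
      = 2 ^ (n - 3) - (1 / 8) * (rho n d21 + 2 * rho n d22 + rho n d81) := by
  have : Fact (Nat.Prime 2) := ⟨Nat.prime_two⟩
  have : CharP K 2 := charP_of_card_eq_prime_pow hK
  let : Algebra (ZMod 2) K := ZMod.algebra K 2
  let S (j : ZMod 8) : ℂ :=
    ∑ a : K, revLogChar (ZMod.stdAddChar.mulShift j) (fieldCharpoly (ZMod 2) a)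
  have hcount : 8 * (Nat.card {a : K // 32 ∣ kloosterman n K a} : ℂ) = ∑ j, S j :=
    eight_mul_card_thirtyTwo_dvd_kloosterman hK hn
  have hzero : S 0 = 8 * 2 ^ (n - 3) := by
    have hpow : 2 ^ n = 8 * 2 ^ (n - 3) := by rw [← pow_mul_pow_sub 2 (by omega : 3 ≤ n)]; rfl
    simp only [S, AddChar.mulShift_zero, sum_revLogChar_one_fieldCharpoly, hK, hpow]
    push_cast
    rfl
  have hne_zero : ∑ j with j ≠ 0, S j = -(rho n d21 + 2 * rho n d22 + rho n d81) := by
    rw [← sum_rootPowerSum_revLPolynomial (by omega : n ≠ 0), ← Finset.sum_neg_distrib]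
    refine Finset.sum_congr rfl fun j hj => ?_
    have hψ := ZMod.isPrimitive_stdAddChar 8 (Finset.mem_filter.1 hj).2
    rw [← finrank_zmod_of_card_eq hK, ← sum_revLogChar_fieldCharpoly hψ]
  rw [← Finset.add_sum_erase _ _ (Finset.mem_univ 0), ← Finset.filter_ne', hzero, hne_zero]
    at hcount
  linear_combination (1 / 8) * hcount
end

section
/- Let f be a monic polynomial of degree m ≥ 4 over the field F_2 = ZMod 2, and for a monic polynomial g over F_2 and k ≥ 1 write T_k(g) for the coefficient of x^{deg g − k} in g. Then for every integer d ≥ 1: (1) T_1(f^d) = d·T_1(f); (2) T_2(f^d) = C(d,2)·T_1(f) + d·T_2(f); (3) T_3(f^d) = C(d,3)·T_1(f) + d·T_3(f); (4) T_4(f^d) = C(d,4)·T_1(f) + C(d,2)·T_2(f) + d·T_4(f) + (d−2)·C(d,2)·T_1(f)·T_2(f); here C(d,k) denotes the binomial coefficient, and all integer scalars act on F_2 through the natural ℤ-module structure (i.e. are reduced modulo 2, with (d−2)·C(d,2) computed in ℤ before reduction). -/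
/-- For a monic polynomial `g` over `F_2` and `k ≥ 1`, `Tc k g` is the coefficient of
`x^(deg g − k)` in `g`. -/
noncomputable def Tc (k : ℕ) (g : Polynomial (ZMod 2)) : ZMod 2 :=
  g.coeff (g.natDegree - k)

/-!
The `k`-th coefficient from the top of `f` is the `k`-th coefficient of the reversed polynomial,
and reversal commutes with powers of a monic `f`. The reversed polynomial has constant term `1`,
so it is `q * X + 1`, and by the binomial theorem the `n`-th coefficient of its `d`-th power is
`∑ j ≤ n, (d choose j) * (q ^ j).coeff (n - j)`. Over `F_2` every element is idempotent and
`2 = 0`, which leaves only the terms in the theorem; the coefficient `(d - 2) * (d choose 2)` there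
is `3 * (d choose 3)`.
-/

section

open Polynomial

section Semiring

variable {R : Type*} [Semiring R]

/-- The coefficient of `X ^ (deg p - k)` in `p`, written `T_k(p)` in the paper and here defined over
an arbitrary semiring. Because of truncated subtraction it is the constant term when
`k > deg p`. -/
def topCoeff (k : ℕ) (p : R[X]) : R :=
  p.coeff (p.natDegree - k)

theorem topCoeff_eq_coeff_reverse {k : ℕ} {p : R[X]} (hk : k ≤ p.natDegree) :
    topCoeff k p = p.reverse.coeff k := by
  rw [topCoeff, coeff_reverse, revAt_le hk]

theorem reverse_pow_of_monic {p : R[X]} (hp : p.Monic) (d : ℕ) :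
    (p ^ d).reverse = p.reverse ^ d := by
  induction d with
  | zero => simpa using reverse_C (1 : R)
  | succ d ih =>
    rw [pow_succ, pow_succ, ← ih, reverse, (hp.pow d).natDegree_mul hp,
      reflect_mul _ _ le_rfl le_rfl, reverse, reverse]

theorem topCoeff_pow_of_monic {p : R[X]} (hp : p.Monic) {k d : ℕ} (hk : k ≤ p.natDegree)
    (hd : 1 ≤ d) : topCoeff k (p ^ d) = (p.reverse ^ d).coeff k := by
  have hk_pow : k ≤ (p ^ d).natDegree := by
    rw [hp.natDegree_pow]
    exact hk.trans (Nat.le_mul_of_pos_left _ hd)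
  rw [topCoeff_eq_coeff_reverse hk_pow, reverse_pow_of_monic hp]

theorem coeff_pow_eq_sum_choose_mul_coeff_divX_pow {p : R[X]} (hp : p.coeff 0 = 1) (d n : ℕ) :
    (p ^ d).coeff n = ∑ j ∈ Finset.range (n + 1), d.choose j * (p.divX ^ j).coeff (n - j) := by
  have expansion :
      p ^ d = ∑ j ∈ Finset.range (d + 1), (d.choose j : R[X]) * (p.divX ^ j * X ^ j) := by
    conv_lhs => rw [← divX_mul_X_add p, hp, C_1, (Commute.one_right _).add_pow]
    simp only [one_pow, mul_one, (commute_X p.divX).symm.mul_pow, Nat.cast_comm]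
  simp only [expansion, finsetSum_coeff, coeff_natCast_mul, coeff_mul_X_pow']
  refine Finset.sum_congr_of_eq_on_inter ?_ ?_ ?_
  · intro j _ hj
    rw [if_neg (by simpa using hj), mul_zero]
  · intro j _ hj
    rw [Nat.choose_eq_zero_of_lt (by simpa using hj), Nat.cast_zero, zero_mul]
  · intro j _ hj
    rw [if_pos (by simpa [Nat.lt_succ_iff] using hj)]

theorem coeff_one_pow_of_coeff_zero_eq_one {p : R[X]} (hp : p.coeff 0 = 1) (d : ℕ) :
    (p ^ d).coeff 1 = d * p.coeff 1 := by
  simp [coeff_pow_eq_sum_choose_mul_coeff_divX_pow hp, Finset.sum_range_succ, coeff_one, coeff_divX]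

theorem coeff_two_pow_of_coeff_zero_eq_one {p : R[X]} (hp : p.coeff 0 = 1) (d : ℕ) :
    (p ^ d).coeff 2 = d.choose 2 * p.coeff 1 ^ 2 + d * p.coeff 2 := by
  simp [coeff_pow_eq_sum_choose_mul_coeff_divX_pow hp, Finset.sum_range_succ, coeff_one, coeff_divX,
    pow_two, add_comm]

end Semiring

section CommSemiring

variable {R : Type*} [CommSemiring R]

theorem coeff_three_pow_of_coeff_zero_eq_one {p : R[X]} (hp : p.coeff 0 = 1) (d : ℕ) :
    (p ^ d).coeff 3 = d.choose 3 * p.coeff 1 ^ 3 + 2 * d.choose 2 * (p.coeff 1 * p.coeff 2)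
      + d * p.coeff 3 := by
  have expansion : (p ^ d).coeff 3 = d * p.divX.coeff 2 + d.choose 2 * (p.divX ^ 2).coeff 1
      + d.choose 3 * (p.divX ^ 3).coeff 0 := by
    simp [coeff_pow_eq_sum_choose_mul_coeff_divX_pow hp, Finset.sum_range_succ, coeff_one]
  have cube_coeff_zero : (p.divX ^ 3).coeff 0 = p.coeff 1 ^ 3 := by
    simp [pow_succ, coeff_divX]
  have sq_coeff_one : (p.divX ^ 2).coeff 1 = 2 * (p.coeff 1 * p.coeff 2) := by
    rw [sq, mul_coeff_one, coeff_divX, coeff_divX]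
    ring
  rw [expansion, cube_coeff_zero, sq_coeff_one, coeff_divX]
  ring

theorem coeff_four_pow_of_coeff_zero_eq_one {p : R[X]} (hp : p.coeff 0 = 1) (d : ℕ) :
    (p ^ d).coeff 4 = d.choose 4 * p.coeff 1 ^ 4
      + d.choose 2 * (p.coeff 2 ^ 2 + 2 * (p.coeff 1 * p.coeff 3)) + d * p.coeff 4
      + 3 * d.choose 3 * (p.coeff 1 ^ 2 * p.coeff 2) := by
  have expansion : (p ^ d).coeff 4 = d * p.divX.coeff 3 + d.choose 2 * (p.divX ^ 2).coeff 2
      + d.choose 3 * (p.divX ^ 3).coeff 1 + d.choose 4 * (p.divX ^ 4).coeff 0 := by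
    simp [coeff_pow_eq_sum_choose_mul_coeff_divX_pow hp, Finset.sum_range_succ, coeff_one]
  have fourth_coeff_zero : (p.divX ^ 4).coeff 0 = p.coeff 1 ^ 4 := by
    simp [pow_succ, coeff_divX]
  have cube_coeff_one : (p.divX ^ 3).coeff 1 = 3 * (p.coeff 1 ^ 2 * p.coeff 2) := by
    simp only [pow_succ, pow_zero, one_mul, mul_coeff_one, mul_coeff_zero, coeff_divX]
    ring
  have sq_coeff_two : (p.divX ^ 2).coeff 2 = p.coeff 2 ^ 2 + 2 * (p.coeff 1 * p.coeff 3) := by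
    simp only [sq, coeff_mul, Finset.Nat.sum_antidiagonal_eq_sum_range_succ_mk,
      Finset.sum_range_succ, Finset.sum_range_zero, coeff_divX]
    ring
  rw [expansion, fourth_coeff_zero, cube_coeff_one, sq_coeff_two, coeff_divX]
  ring

theorem statement18_general {f : R[X]} (hf : f.Monic) (hdeg : 4 ≤ f.natDegree) {d : ℕ}
    (hd : 1 ≤ d) :
    topCoeff 1 (f ^ d) = d * topCoeff 1 f ∧
    topCoeff 2 (f ^ d) = d.choose 2 * topCoeff 1 f ^ 2 + d * topCoeff 2 f ∧
    topCoeff 3 (f ^ d) = d.choose 3 * topCoeff 1 f ^ 3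
      + 2 * d.choose 2 * (topCoeff 1 f * topCoeff 2 f) + d * topCoeff 3 f ∧
    topCoeff 4 (f ^ d) = d.choose 4 * topCoeff 1 f ^ 4
      + d.choose 2 * (topCoeff 2 f ^ 2 + 2 * (topCoeff 1 f * topCoeff 3 f)) + d * topCoeff 4 f
      + 3 * d.choose 3 * (topCoeff 1 f ^ 2 * topCoeff 2 f) := by
  have h0 : f.reverse.coeff 0 = 1 := by rw [coeff_zero_reverse, hf.leadingCoeff]
  have top_eq {k : ℕ} (hk : k ≤ 4) : topCoeff k f = f.reverse.coeff k :=
    topCoeff_eq_coeff_reverse (hk.trans hdeg)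
  have top_pow_eq {k : ℕ} (hk : k ≤ 4) : topCoeff k (f ^ d) = (f.reverse ^ d).coeff k :=
    topCoeff_pow_of_monic hf (hk.trans hdeg) hd
  simp only [top_eq, top_pow_eq, Nat.reduceLeDiff, le_refl]
  exact ⟨coeff_one_pow_of_coeff_zero_eq_one h0 d, coeff_two_pow_of_coeff_zero_eq_one h0 d,
    coeff_three_pow_of_coeff_zero_eq_one h0 d, coeff_four_pow_of_coeff_zero_eq_one h0 d⟩

end CommSemiring

theorem succ_mul_choose_succ_eq_sub_mul_choose (n k : ℕ) :
    ((k : ℤ) + 1) * n.choose (k + 1) = ((n : ℤ) - k) * n.choose k := by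
  rcases le_or_gt k n with hk | hk
  · rw [← Nat.cast_sub hk, mul_comm, mul_comm ((n - k : ℕ) : ℤ)]
    exact_mod_cast Nat.choose_succ_right_eq n k
  · simp [Nat.choose_eq_zero_of_lt, hk, hk.trans (Nat.lt_succ_self k)]

theorem zmod_two_pow_succ (a : ZMod 2) (n : ℕ) : a ^ (n + 1) = a :=
  IsIdempotentElem.pow_succ_eq n <| (sq a).symm.trans (ZMod.pow_card a)

end

theorem statement18 (m : ℕ) (hm : 4 ≤ m) (f : Polynomial (ZMod 2)) (hf : f.Monic)
    (hdeg : f.natDegree = m) (d : ℕ) (hd : 1 ≤ d) :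
    (Tc 1 (f ^ d) = (d : ZMod 2) * Tc 1 f) ∧
    (Tc 2 (f ^ d) = (d.choose 2 : ZMod 2) * Tc 1 f + (d : ZMod 2) * Tc 2 f) ∧
    (Tc 3 (f ^ d) = (d.choose 3 : ZMod 2) * Tc 1 f + (d : ZMod 2) * Tc 3 f) ∧
    (Tc 4 (f ^ d) = (d.choose 4 : ZMod 2) * Tc 1 f + (d.choose 2 : ZMod 2) * Tc 2 f
        + (d : ZMod 2) * Tc 4 f
        + ((((d : ℤ) - 2) * (d.choose 2 : ℤ) : ℤ) : ZMod 2) * (Tc 1 f * Tc 2 f)) := by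
  have three_mul_choose : ((d : ℤ) - 2) * d.choose 2 = 3 * d.choose 3 :=
    (succ_mul_choose_succ_eq_sub_mul_choose d 2).symm
  simpa [three_mul_choose, zmod_two_pow_succ, CharTwo.two_eq_zero, Tc, topCoeff] using
    statement18_general hf (hm.trans_eq hdeg.symm) hd
end
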